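/- arXiv:1903.02385 — 4 statements merged into one kernel-verified Lean document; each statement's English description precedes it below -/
import Mathlib

section
/- Let G(v) = ∫₀^v g(t) dt − B·v²/2 for v ≥ 0. Then G(0) = 0, the (right) derivative of G at 0 is 0, and there exists a₀ > 0 such that G is strictly decreasing on (0, a₀), strictly increasing on (a₀, ∞), and G(v) → ∞ as v → ∞. -/
open Real Filter Set

noncomputable section

/-- Conditions (G) on the nonlinearity `g`, extended to `[0,∞)` by `g 0 = 0`. -/
def CondG (n : ℕ) (g : ℝ → ℝ) : Prop :=
  ContDiffOn ℝ 1 g (Set.Ioi 0) ∧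
  (∀ t > 0, 0 < g t) ∧
  Filter.Tendsto g (nhdsWithin 0 (Set.Ioi 0)) (nhds 0) ∧
  (∀ t > 0, g t / t < deriv g t ∧ deriv g t ≤ (((n : ℝ) + 4) / ((n : ℝ) - 4)) * (g t / t)) ∧
  (∃ β : ℝ, 0 ≤ β ∧ β < (n : ℝ) ^ 2 * ((n : ℝ) - 4) ^ 2 / 16 ∧
    Filter.Tendsto (deriv g) (nhdsWithin 0 (Set.Ioi 0)) (nhds β)) ∧
  (∃ q c : ℝ, 1 < q ∧ 0 < c ∧ ∀ t ≥ 1, c * t ^ q ≤ g t) ∧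
  g 0 = 0

/-- `v` solves the ODE `v'''' - A v'' + B v = g(v)` on all of `ℝ`. -/
def IsSol (A B : ℝ) (g v : ℝ → ℝ) : Prop :=
  ∀ t : ℝ, iteratedDeriv 4 v t - A * iteratedDeriv 2 v t + B * v t = g (v t)

theorem stmt_0 (n : ℕ) (hn : 5 ≤ n) (g : ℝ → ℝ) (hg : CondG n g)
    (B : ℝ) (hB : B = (n : ℝ) ^ 2 * ((n : ℝ) - 4) ^ 2 / 16)
    (G : ℝ → ℝ) (hG : ∀ v : ℝ, G v = (∫ t in (0:ℝ)..v, g t) - B * v ^ 2 / 2) :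
    G 0 = 0 ∧ HasDerivWithinAt G 0 (Set.Ici (0 : ℝ)) 0 ∧
    ∃ a₀ : ℝ, 0 < a₀ ∧ StrictAntiOn G (Set.Ioo 0 a₀) ∧ StrictMonoOn G (Set.Ioi a₀) ∧
      Filter.Tendsto G Filter.atTop Filter.atTop := by
  obtain ⟨hC, hpos, hlim, hder, ⟨β, hβ0, hβB, hβ⟩, ⟨q, c, hq, hc, hqc⟩, hg0⟩ := hg
  rw [← hB] at hβB
  have hcg : ContinuousOn g (Ioi 0) := hC.continuousOn
  have hdg : ∀ t > 0, HasDerivAt g (deriv g t) t := fun t ht =>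
    ((hC.differentiableOn (by norm_num)).differentiableAt (Ioi_mem_nhds ht)).hasDerivAt
  have hcIci : ContinuousOn g (Ici 0) := by
    intro x hx
    rcases eq_or_lt_of_le (show (0:ℝ) ≤ x from hx) with h | h
    · subst h
      rw [← continuousWithinAt_Ioi_iff_Ici]
      unfold ContinuousWithinAt
      rw [hg0]
      exact hlim
    · exact (hdg x h).continuousAt.continuousWithinAt
  set h : ℝ → ℝ := fun t => g (max t 0) with hh
  have hhc : Continuous h :=
    hcIci.comp_continuous (by fun_prop) (fun x => le_max_right x 0)
  set H : ℝ → ℝ := fun v => (∫ t in (0:ℝ)..v, h t) - B * v ^ 2 / 2 with hH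
  have hHd : ∀ v, HasDerivAt H (h v - B * v) v := by
    intro v
    have h1 : HasDerivAt (fun v => ∫ t in (0:ℝ)..v, h t) (h v) v :=
      intervalIntegral.integral_hasDerivAt_right (hhc.intervalIntegrable _ _)
        (hhc.stronglyMeasurableAtFilter _ _) hhc.continuousAt
    have h2 : HasDerivAt (fun v : ℝ => B * v ^ 2 / 2) (B * v) v := by
      have h3 := ((hasDerivAt_pow 2 v).const_mul B).div_const 2
      have h4 : B * (((2:ℕ):ℝ) * v ^ (2 - 1)) / 2 = B * v := by
        norm_num
        ring
      rw [← h4]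
      exact h3
    exact h1.sub h2
  have hGH : ∀ v ∈ Ici (0:ℝ), G v = H v := by
    intro v hv
    rw [hG, hH]
    congr 1
    apply intervalIntegral.integral_congr
    intro t ht
    rw [uIcc_of_le hv] at ht
    simp [hh, max_eq_left ht.1]
  have hHcont : Continuous H := continuous_iff_continuousAt.2 fun v => (hHd v).continuousAt
  have hderH : ∀ v > 0, deriv H v = v * (g v / v - B) := by
    intro v hv
    rw [(hHd v).deriv]
    simp only [hh, max_eq_left hv.le]
    field_simp
  have hφc : ContinuousOn (fun t => g t / t) (Ioi 0) :=
    hcg.div continuousOn_id (fun x hx => ne_of_gt hx)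
  have hφ : StrictMonoOn (fun t => g t / t) (Ioi 0) := by
    apply strictMonoOn_of_deriv_pos (convex_Ioi 0) hφc
    intro t ht
    rw [interior_Ioi] at ht
    have ht : 0 < t := ht
    have := (hdg t ht).div (hasDerivAt_id t) ht.ne'
    have e : deriv (fun t => g t / t) t = (deriv g t * t - g t * 1) / t ^ 2 := this.deriv
    rw [e]
    have h3 := (div_lt_iff₀ ht).1 (hder t ht).1
    apply div_pos (by linarith) (by positivity)
  obtain ⟨s, hs0, hsB⟩ : ∃ s > 0, g s / s < B := by
    have h1 : ∀ᶠ t in nhdsWithin (0:ℝ) (Ioi 0), deriv g t < B := hβ.eventually_lt_const hβB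
    obtain ⟨s, hs1, hs2⟩ := (h1.and self_mem_nhdsWithin).exists
    exact ⟨s, hs2, (hder s hs2).1.trans hs1⟩
  obtain ⟨T, hT0, hTB⟩ : ∃ T > 0, B < g T / T := by
    have h1 : Tendsto (fun t : ℝ => c * t ^ (q - 1)) atTop atTop :=
      (tendsto_rpow_atTop (by linarith)).const_mul_atTop hc
    obtain ⟨T, hT1, hT2⟩ := ((h1.eventually_gt_atTop B).and (eventually_ge_atTop 1)).exists
    have hT : 0 < T := by linarith
    refine ⟨T, hT, hT1.trans_le ?_⟩
    rw [le_div_iff₀ hT]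
    refine le_trans (le_of_eq ?_) (hqc T hT2)
    rw [rpow_sub_one hT.ne']
    field_simp
  obtain ⟨a, ha, haB⟩ : ∃ a ∈ Ioi (0:ℝ), g a / a = B :=
    isPreconnected_Ioi.intermediate_value (f := fun t => g t / t) hs0 hT0 hφc ⟨hsB.le, hTB.le⟩
  have ha : 0 < a := ha
  have hneg : ∀ v, 0 < v → v < a → deriv H v < 0 := by
    intro v hv hva
    rw [hderH v hv]
    have : g v / v < g a / a := hφ hv ha hva
    exact mul_neg_of_pos_of_neg hv (by linarith)
  have hanti : StrictAntiOn H (Ioo 0 a) := by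
    apply strictAntiOn_of_deriv_neg (convex_Ioo 0 a) hHcont.continuousOn
    intro v hv
    rw [interior_Ioo] at hv
    exact hneg v hv.1 hv.2
  have hmono : StrictMonoOn H (Ioi a) := by
    apply strictMonoOn_of_deriv_pos (convex_Ioi a) hHcont.continuousOn
    intro v hv
    rw [interior_Ioi] at hv
    have hv : a < v := hv
    have hv0 : 0 < v := ha.trans hv
    rw [hderH v hv0]
    have : g a / a < g v / v := hφ ha hv0 hv
    exact mul_pos hv0 (by linarith)
  refine ⟨by simp [hG], ?_, a, ha, ?_, ?_, ?_⟩
  · have := (hHd 0).hasDerivWithinAt (s := Ici 0)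
    simp only [hh, max_self, hg0, mul_zero, sub_zero] at this
    exact this.congr hGH (hGH 0 self_mem_Ici)
  · exact hanti.congr fun v hv => (hGH v hv.1.le).symm
  · exact hmono.congr fun v hv => (hGH v (ha.trans hv).le).symm
  · set m := T * (g T / T - B) with hm
    have hm0 : 0 < m := mul_pos hT0 (by linarith)
    have hbound : ∀ v ≥ T, m * (v - T) ≤ H v - H T := by
      intro v hv
      refine (convex_Ici T).mul_sub_le_image_sub_of_le_deriv hHcont.continuousOn
        (fun x _ => (hHd x).differentiableAt.differentiableWithinAt) ?_ T self_mem_Ici v hv hv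
      intro x hx
      rw [interior_Ici] at hx
      have hx : T < x := hx
      have hx0 : 0 < x := hT0.trans hx
      rw [hderH x hx0, hm]
      have : g T / T < g x / x := hφ hT0 hx0 hx
      apply mul_le_mul hx.le (by linarith) (by linarith) hx0.le
    have ht : Tendsto (fun v => m * (v - T) + H T) atTop atTop :=
      tendsto_atTop_add_const_right _ _
        ((tendsto_atTop_add_const_right _ (-T) tendsto_id).const_mul_atTop hm0)
    refine tendsto_atTop_mono' _ ?_ ht
    filter_upwards [eventually_ge_atTop T] with v hv
    rw [hGH v (hT0.le.trans hv)]
    linarith [hbound v hv]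
end
end

section
/- For every a ∈ (0, a₀) there exist a C⁴ positive solution v : ℝ → ℝ of the ODE v''''(t) − A·v''(t) + B·v(t) = g(v(t)) and a number L > 0 such that: v(t + L) = v(t) for all t ∈ ℝ; v(−t) = v(t) for all t ∈ ℝ; v(0) = max_{t ∈ ℝ} v(t); v(L/2) = min_{t ∈ ℝ} v(t) = a; and v is strictly decreasing on the interval [0, L/2]. In particular, inf_{ℝ} v = a and v is bounded. -/
open Real Filter Set

noncomputable section

theorem coop_pos (γ α : ℝ) (hγ : 0 ≤ γ) (hα : 0 ≤ α) (d p e q k : ℝ → ℝ)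
    (hd : ∀ t, HasDerivAt d (p t) t) (hp : ∀ t, HasDerivAt p (e t + γ * d t) t)
    (he : ∀ t, HasDerivAt e (q t) t) (hq : ∀ t, HasDerivAt q (α * e t + k t) t)
    (hk : ∀ t, 0 ≤ d t → 0 ≤ k t)
    (d0 : 0 < d 0) (p0 : 0 < p 0) (e0 : 0 < e 0) (q0 : 0 < q 0) :
    ∀ t, 0 ≤ t → 0 < d t ∧ 0 < p t ∧ 0 < e t ∧ 0 < q t := by
  intro t1 ht1
  by_contra hcon
  let m : ℝ → ℝ := fun t => min (min (d t) (p t)) (min (e t) (q t))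
  have dc : Continuous d := continuous_iff_continuousAt.2 fun t => (hd t).continuousAt
  have pc : Continuous p := continuous_iff_continuousAt.2 fun t => (hp t).continuousAt
  have ec : Continuous e := continuous_iff_continuousAt.2 fun t => (he t).continuousAt
  have qc : Continuous q := continuous_iff_continuousAt.2 fun t => (hq t).continuousAt
  have mc : Continuous m := by fun_prop
  have hm : ∀ t, 0 < m t ↔ 0 < d t ∧ 0 < p t ∧ 0 < e t ∧ 0 < q t := by
    intro t; simp only [m, lt_min_iff]; tauto
  let C : Set ℝ := Icc 0 t1 ∩ {t | m t ≤ 0}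
  have hCc : IsClosed C := isClosed_Icc.inter (isClosed_le mc continuous_const)
  have hCn : C.Nonempty := ⟨t1, ⟨ht1, le_rfl⟩, by
    rw [← hm] at hcon; exact not_lt.1 hcon⟩
  have hCb : BddBelow C := ⟨0, fun x hx => hx.1.1⟩
  have hτ := hCc.csInf_mem hCn hCb
  set τ := sInf C with hτd
  have hlt : ∀ t, 0 ≤ t → t < τ → 0 < d t ∧ 0 < p t ∧ 0 < e t ∧ 0 < q t := by
    intro t h0 h1
    rw [← hm]
    by_contra h2
    exact absurd (csInf_le hCb ⟨⟨h0, h1.le.trans hτ.1.2⟩, not_lt.1 h2⟩) (not_le.2 h1)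
  have key : ∀ f f' : ℝ → ℝ, (∀ t, HasDerivAt f (f' t) t) →
      (∀ t, 0 ≤ t → t < τ → 0 ≤ f' t) → f 0 ≤ f τ := by
    intro f f' hf hf'
    have : MonotoneOn f (Icc 0 τ) := by
      apply monotoneOn_of_deriv_nonneg (convex_Icc _ _)
      · exact fun t _ => (hf t).continuousAt.continuousWithinAt
      · exact fun t _ => (hf t).differentiableAt.differentiableWithinAt
      · intro t ht
        rw [interior_Icc] at ht
        rw [(hf t).deriv]
        exact hf' t ht.1.le ht.2
    exact this ⟨le_rfl, hτ.1.1⟩ ⟨hτ.1.1, le_rfl⟩ hτ.1.1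
  have h1 := key d p hd fun t a b => (hlt t a b).2.1.le
  have h2 := key p _ hp fun t a b => by
    have := hlt t a b
    have := mul_nonneg hγ this.1.le
    linarith
  have h3 := key e q he fun t a b => (hlt t a b).2.2.2.le
  have h4 := key q _ hq fun t a b => by
    have h := hlt t a b
    have := mul_nonneg hα h.2.2.1.le
    have := hk t h.1.le
    linarith
  exact absurd hτ.2 (not_le.2 ((hm τ).2 ⟨by linarith, by linarith, by linarith, by linarith⟩))

theorem first_zero (p : ℝ → ℝ) (hp : Continuous p) (t0 t1 : ℝ) (h0 : 0 < t0) (h01 : t0 < t1)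
    (hpos : ∀ t, 0 < t → t < t0 → 0 < p t) (hneg : p t1 < 0) :
    ∃ T, t0 ≤ T ∧ T < t1 ∧ p T = 0 ∧ ∀ t, 0 < t → t < T → 0 < p t := by
  let C : Set ℝ := Icc t0 t1 ∩ {t | p t ≤ 0}
  have hCc : IsClosed C := isClosed_Icc.inter (isClosed_le hp continuous_const)
  have hCn : C.Nonempty := ⟨t1, ⟨h01.le, le_rfl⟩, hneg.le⟩
  have hCb : BddBelow C := ⟨t0, fun x hx => hx.1.1⟩
  have hτ := hCc.csInf_mem hCn hCb
  set τ := sInf C with hτd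
  have hlt : ∀ t, 0 < t → t < τ → 0 < p t := by
    intro t ht h1
    rcases lt_or_ge t t0 with h | h
    · exact hpos t ht h
    by_contra h2
    exact absurd (csInf_le hCb ⟨⟨h, h1.le.trans hτ.1.2⟩, not_lt.1 h2⟩) (not_le.2 h1)
  have hτ0 : 0 < τ := h0.trans_le hτ.1.1
  have hge : 0 ≤ p τ := by
    have h1 : Tendsto p (nhdsWithin τ (Iio τ)) (nhds (p τ)) :=
      hp.continuousAt.tendsto.mono_left nhdsWithin_le_nhds
    refine ge_of_tendsto h1 ?_
    filter_upwards [Ioo_mem_nhdsLT hτ0] with t ht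
    exact (hlt t ht.1 ht.2).le
  refine ⟨τ, hτ.1.1, lt_of_le_of_ne hτ.1.2 ?_, le_antisymm hτ.2 hge, hlt⟩
  intro h
  rw [h] at hge
  linarith

theorem neg_of_deriv_neg (f f' : ℝ → ℝ) (hf : ∀ t, HasDerivAt f (f' t) t) (δ : ℝ)
    (h0 : f 0 = 0) (h : ∀ t, 0 < t → t < δ → f' t < 0) : ∀ t, 0 < t → t ≤ δ → f t < 0 := by
  intro t ht htd
  have : StrictAntiOn f (Icc 0 δ) := by
    apply strictAntiOn_of_deriv_neg (convex_Icc _ _)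
    · exact fun t _ => (hf t).continuousAt.continuousWithinAt
    · intro t ht
      rw [interior_Icc] at ht
      rw [(hf t).deriv]
      exact h t ht.1 ht.2
  have := this ⟨le_rfl, ht.le.trans htd⟩ ⟨ht.le, htd⟩ ht
  linarith

theorem tendsto_top_of_deriv (f f' : ℝ → ℝ) (hf : ∀ t, HasDerivAt f (f' t) t) (c : ℝ) (hc : 0 < c)
    (h : ∀ᶠ t in atTop, c ≤ f' t) : Tendsto f atTop atTop := by
  obtain ⟨t0, ht0⟩ := eventually_atTop.1 h
  have key : ∀ t, t0 ≤ t → f t0 + c * (t - t0) ≤ f t := by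
    intro t ht
    have := (convex_Icc t0 t).mul_sub_le_image_sub_of_le_deriv (f := f) (C := c)
      (fun t _ => (hf t).continuousAt.continuousWithinAt)
      (fun t _ => (hf t).differentiableAt.differentiableWithinAt)
      (fun s hs => by
        rw [interior_Icc] at hs
        rw [(hf s).deriv]
        exact ht0 s hs.1.le)
      t0 ⟨le_rfl, ht⟩ t ⟨ht, le_rfl⟩ ht
    linarith
  have h2 : Tendsto (fun t => f t0 + c * (t - t0)) atTop atTop := by
    apply tendsto_atTop_add_const_left
    apply Tendsto.const_mul_atTop hc
    exact tendsto_atTop_add_const_right _ _ tendsto_id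
  exact tendsto_atTop_mono' _ (eventually_atTop.2 ⟨t0, key⟩) h2

theorem exists_flow {E : Type*} [NormedAddCommGroup E] [NormedSpace ℝ E] [CompleteSpace E]
    (X : E → E) (K : NNReal) (hX : LipschitzWith K X) :
    ∃ Φ : E → ℝ → E, (∀ x, Φ x 0 = x) ∧ (∀ x t, HasDerivAt (Φ x) (X (Φ x t)) t) ∧
      Continuous (fun q : E × ℝ => Φ q.1 q.2) := by
  set l : ℝ := 2 * K + 1 with hl
  have hK : (0 : ℝ) ≤ K := K.2
  have hlpos : 0 < l := by positivity
  have hc : ∀ t, 0 < cosh (l * t) := fun t => Real.cosh_pos _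
  have hc1 : ∀ t, 1 ≤ cosh (l * t) := fun t => Real.one_le_cosh _
  have hcc : Continuous fun t : ℝ => cosh (l * t) := by fun_prop
  have hcosh_int : ∀ t, |∫ s in (0 : ℝ)..t, cosh (l * s)| ≤ cosh (l * t) / l := by
    intro t
    have h : ∫ s in (0 : ℝ)..t, cosh (l * s) = sinh (l * t) / l - sinh (l * 0) / l := by
      apply intervalIntegral.integral_eq_sub_of_hasDerivAt
      · intro s _
        have h1 : HasDerivAt (fun s : ℝ => l * s) l s := by
          simpa using (hasDerivAt_id s).const_mul l
        have := (h1.sinh).div_const l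
        rwa [mul_div_cancel_right₀ _ hlpos.ne'] at this
      · exact hcc.intervalIntegrable _ _
    rw [h]
    simp only [mul_zero, Real.sinh_zero, zero_div, sub_zero]
    rw [abs_div, abs_of_pos hlpos]
    gcongr
    rw [abs_le]
    have h3 := Real.cosh_sq (l * t)
    have := hc t
    constructor <;> nlinarith
  have hXc : Continuous X := hX.continuous
  let I : BoundedContinuousFunction ℝ E → ℝ → E := fun u t =>
    ∫ s in (0 : ℝ)..t, X (cosh (l * s) • u s)
  have hIc' : ∀ u : BoundedContinuousFunction ℝ E, Continuous fun s => X (cosh (l * s) • u s) := by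
    intro u
    exact hXc.comp (hcc.smul u.continuous)
  have hId : ∀ u t, HasDerivAt (I u) (X (cosh (l * t) • u t)) t := by
    intro u t
    exact intervalIntegral.integral_hasDerivAt_right ((hIc' u).intervalIntegrable _ _)
      (hIc' u).aestronglyMeasurable.stronglyMeasurableAtFilter (hIc' u).continuousAt
  have hIb : ∀ u t, ‖I u t‖ ≤ (‖X 0‖ + K * ‖u‖) * (cosh (l * t) / l) := by
    intro u t
    have h1 : ‖I u t‖ ≤ |∫ s in (0 : ℝ)..t, (‖X 0‖ + K * ‖u‖) * cosh (l * s)| := by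
      apply intervalIntegral.norm_integral_le_abs_of_norm_le
      · refine Filter.Eventually.of_forall fun s => ?_
        have h2 := hX.dist_le_mul (cosh (l * s) • u s) 0
        rw [dist_eq_norm, dist_eq_norm, sub_zero, norm_smul, Real.norm_of_nonneg (hc s).le] at h2
        have h3 := norm_le_norm_add_norm_sub (X 0) (X (cosh (l * s) • u s))
        rw [norm_sub_rev] at h3
        have h4 := u.norm_coe_le_norm s
        have h5 : ‖X 0‖ ≤ ‖X 0‖ * cosh (l * s) := le_mul_of_one_le_right (norm_nonneg _) (hc1 s)
        have h6 : (K : ℝ) * (cosh (l * s) * ‖u s‖) ≤ K * (cosh (l * s) * ‖u‖) := by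
          have := (hc s).le
          gcongr
        have h7 := norm_sub_norm_le (X (cosh (l * s) • u s)) (X 0)
        nlinarith
      · exact (hcc.const_mul _).intervalIntegrable _ _
    rw [intervalIntegral.integral_const_mul, abs_mul, abs_of_nonneg (by positivity)] at h1
    exact h1.trans (by gcongr; exact hcosh_int t)
  have hIl : ∀ u w t, ‖I u t - I w t‖ ≤ K * dist u w * (cosh (l * t) / l) := by
    intro u w t
    have h1 : ‖I u t - I w t‖ ≤ |∫ s in (0 : ℝ)..t, (K * dist u w) * cosh (l * s)| := by
      simp only [I]
      rw [← intervalIntegral.integral_sub ((hIc' u).intervalIntegrable _ _)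
        ((hIc' w).intervalIntegrable _ _)]
      apply intervalIntegral.norm_integral_le_abs_of_norm_le
      · refine Filter.Eventually.of_forall fun s => ?_
        have h2 := hX.dist_le_mul (cosh (l * s) • u s) (cosh (l * s) • w s)
        rw [dist_eq_norm, dist_eq_norm, ← smul_sub, norm_smul, Real.norm_of_nonneg (hc s).le,
          ← dist_eq_norm (u s)] at h2
        have h4 := BoundedContinuousFunction.dist_coe_le_dist (f := u) (g := w) s
        refine h2.trans ?_
        have := (hc s).le
        calc (K : ℝ) * (cosh (l * s) * dist (u s) (w s)) ≤ K * (cosh (l * s) * dist u w) := by gcongr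
          _ = _ := by ring
      · exact (hcc.const_mul _).intervalIntegrable _ _
    rw [intervalIntegral.integral_const_mul, abs_mul, abs_of_nonneg (by positivity)] at h1
    exact h1.trans (by gcongr; exact hcosh_int t)
  have hIcont : ∀ u, Continuous (I u) := fun u =>
    continuous_iff_continuousAt.2 fun t => (hId u t).continuousAt
  let Ψ : E → BoundedContinuousFunction ℝ E → BoundedContinuousFunction ℝ E := fun x u =>
    BoundedContinuousFunction.ofNormedAddCommGroup
      (fun t => (cosh (l * t))⁻¹ • (x + I u t))
      ((hcc.inv₀ fun t => (hc t).ne').smul (continuous_const.add (hIcont u)))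
      (‖x‖ + (‖X 0‖ + K * ‖u‖) / l) (by
        intro t
        rw [norm_smul, norm_inv, Real.norm_of_nonneg (hc t).le, inv_mul_le_iff₀ (hc t)]
        have h1 := norm_add_le x (I u t)
        have h2 := hIb u t
        have h3 : ‖x‖ ≤ cosh (l * t) * ‖x‖ := le_mul_of_one_le_left (norm_nonneg _) (hc1 t)
        calc _ ≤ cosh (l * t) * ‖x‖ + (‖X 0‖ + K * ‖u‖) * (cosh (l * t) / l) := by linarith
          _ = _ := by ring)
  have hΨ : ∀ x u t, Ψ x u t = (cosh (l * t))⁻¹ • (x + I u t) := fun x u t => rfl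
  have hcontr : ∀ x, ContractingWith (1 / 2) (Ψ x) := by
    intro x
    refine ⟨by rw [← NNReal.coe_lt_coe]; norm_num, LipschitzWith.of_dist_le_mul fun u w => ?_⟩
    rw [BoundedContinuousFunction.dist_le (by positivity)]
    intro t
    rw [hΨ, hΨ, dist_eq_norm, ← smul_sub, add_sub_add_left_eq_sub, norm_smul, norm_inv,
      Real.norm_of_nonneg (hc t).le, inv_mul_le_iff₀ (hc t)]
    refine (hIl u w t).trans ?_
    have : (K : ℝ) / l ≤ 1 / 2 := by
      rw [div_le_div_iff₀ hlpos (by norm_num)]; linarith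
    have h5 : 0 ≤ dist u w * cosh (l * t) := mul_nonneg dist_nonneg (hc t).le
    calc K * dist u w * (cosh (l * t) / l) = (K / l) * (dist u w * cosh (l * t)) := by ring
      _ ≤ 1 / 2 * (dist u w * cosh (l * t)) := by gcongr
      _ = _ := by push_cast; ring
  let U : E → BoundedContinuousFunction ℝ E := fun x => ContractingWith.fixedPoint (Ψ x) (hcontr x)
  have hU : ∀ x, Ψ x (U x) = U x := fun x => ContractingWith.fixedPoint_isFixedPt (hcontr x)
  have hUc : Continuous U := by
    refine (LipschitzWith.of_dist_le_mul (K := 2) fun x y => ?_).continuous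
    have := ContractingWith.fixedPoint_lipschitz_in_map (hcontr x) (hcontr y) (C := dist x y) (by
      intro u
      rw [BoundedContinuousFunction.dist_le dist_nonneg]
      intro t
      rw [hΨ, hΨ, dist_eq_norm, ← smul_sub, add_sub_add_right_eq_sub, norm_smul, norm_inv,
        Real.norm_of_nonneg (hc t).le, inv_mul_le_iff₀ (hc t), dist_eq_norm]
      exact le_mul_of_one_le_left (norm_nonneg _) (hc1 t))
    refine this.trans (le_of_eq ?_)
    push_cast
    ring
  have hfix : ∀ x t, cosh (l * t) • U x t = x + I (U x) t := by
    intro x t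
    have := hΨ x (U x) t
    rw [hU] at this
    rw [this, smul_smul, mul_inv_cancel₀ (hc t).ne', one_smul]
  refine ⟨fun x t => cosh (l * t) • U x t, ?_, ?_, ?_⟩
  · intro x
    simp only [hfix]
    simp [I]
  · intro x t
    have h1 : (fun t => cosh (l * t) • U x t) = fun t => x + I (U x) t := funext (hfix x)
    show HasDerivAt (fun t => cosh (l * t) • U x t) (X (cosh (l * t) • U x t)) t
    rw [h1]
    simpa using (hId (U x) t).const_add x
  · have h2 : Continuous fun q : E × ℝ => U q.1 q.2 :=
      (continuous_eval (F := BoundedContinuousFunction ℝ E)).comp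
        ((hUc.comp continuous_fst).prodMk continuous_snd)
    exact (hcc.comp continuous_snd).smul h2

/-- The first order system equivalent to the fourth order equation. -/
structure Sys (γ α : ℝ) (h v p w z : ℝ → ℝ) : Prop where
  dv : ∀ t, HasDerivAt v (p t) t
  dp : ∀ t, HasDerivAt p (w t + γ * v t) t
  dw : ∀ t, HasDerivAt w (z t) t
  dz : ∀ t, HasDerivAt z (α * w t + h (v t)) t

/-- The vector field. -/
def vf (γ α : ℝ) (h : ℝ → ℝ) (x : ℝ × ℝ × ℝ × ℝ) : ℝ × ℝ × ℝ × ℝ :=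
  (x.2.1, x.2.2.1 + γ * x.1, x.2.2.2, α * x.2.2.1 + h x.1)

theorem vf_lip (γ α : ℝ) (h : ℝ → ℝ) (K : NNReal) (hh : LipschitzWith K h) :
    ∃ K', LipschitzWith K' (vf γ α h) := by
  have l1 : LipschitzWith 1 (fun x : ℝ × ℝ × ℝ × ℝ => x.1) := LipschitzWith.prod_fst
  have l2' : LipschitzWith 1 (fun x : ℝ × ℝ × ℝ × ℝ => x.2) := LipschitzWith.prod_snd
  have l2 := (LipschitzWith.prod_fst (α := ℝ) (β := ℝ × ℝ)).comp l2'
  have l3' := (LipschitzWith.prod_snd (α := ℝ) (β := ℝ × ℝ)).comp l2'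
  have l3 := (LipschitzWith.prod_fst (α := ℝ) (β := ℝ)).comp l3'
  have l4 := (LipschitzWith.prod_snd (α := ℝ) (β := ℝ)).comp l3'
  have c1 : LipschitzWith ‖γ‖₊ (fun x : ℝ => γ * x) := lipschitzWith_smul γ
  have c2 : LipschitzWith ‖α‖₊ (fun x : ℝ => α * x) := lipschitzWith_smul α
  exact ⟨_, l2.prodMk ((l3.add (c1.comp l1)).prodMk (l4.prodMk ((c2.comp l3).add (hh.comp l1))))⟩

theorem Sys.hasDerivAt {γ α : ℝ} {h v p w z : ℝ → ℝ} (H : Sys γ α h v p w z) (t : ℝ) :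
    HasDerivAt (fun t => (v t, p t, w t, z t)) (vf γ α h (v t, p t, w t, z t)) t :=
  (H.dv t).prodMk ((H.dp t).prodMk ((H.dw t).prodMk (H.dz t)))

theorem Sys.of_hasDerivAt {γ α : ℝ} {h : ℝ → ℝ} {x : ℝ → ℝ × ℝ × ℝ × ℝ}
    (H : ∀ t, HasDerivAt x (vf γ α h (x t)) t) :
    Sys γ α h (fun t => (x t).1) (fun t => (x t).2.1) (fun t => (x t).2.2.1)
      (fun t => (x t).2.2.2) := by
  have f1 := fun t => (H t).fst
  have f2 := fun t => (H t).snd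
  have f3 := fun t => (f2 t).fst
  have f4 := fun t => (f2 t).snd
  have f5 := fun t => (f4 t).fst
  have f6 := fun t => (f4 t).snd
  exact ⟨f1, f3, f5, f6⟩

theorem Sys.unique {γ α : ℝ} {h v p w z v' p' w' z' : ℝ → ℝ} (K : NNReal) (hh : LipschitzWith K h)
    (H : Sys γ α h v p w z) (H' : Sys γ α h v' p' w' z') (t0 : ℝ)
    (e1 : v t0 = v' t0) (e2 : p t0 = p' t0) (e3 : w t0 = w' t0) (e4 : z t0 = z' t0) :
    v = v' ∧ p = p' ∧ w = w' ∧ z = z' := by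
  obtain ⟨K', hK'⟩ := vf_lip γ α h K hh
  have := ODE_solution_unique_univ (v := fun _ => vf γ α h) (s := fun _ => univ) (K := K')
    (f := fun t => (v t, p t, w t, z t)) (g := fun t => (v' t, p' t, w' t, z' t)) (t₀ := t0)
    (fun _ => hK'.lipschitzOnWith) (fun t => ⟨H.hasDerivAt t, mem_univ _⟩)
    (fun t => ⟨H'.hasDerivAt t, mem_univ _⟩) (by simp [e1, e2, e3, e4])
  have h1 := fun t => congrFun this t
  simp only [Prod.mk.injEq] at h1
  exact ⟨funext fun t => (h1 t).1, funext fun t => (h1 t).2.1, funext fun t => (h1 t).2.2.1,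
    funext fun t => (h1 t).2.2.2⟩

theorem Sys.mono {γ α : ℝ} (hγ : 0 ≤ γ) (hα : 0 ≤ α) {h v p w z v' p' w' z' : ℝ → ℝ}
    (hh : Monotone h)
    (H : Sys γ α h v p w z) (H' : Sys γ α h v' p' w' z')
    (e1 : v 0 < v' 0) (e2 : p 0 < p' 0) (e3 : w 0 < w' 0) (e4 : z 0 < z' 0) (t : ℝ) (ht : 0 ≤ t) :
    v t < v' t ∧ p t < p' t ∧ w t < w' t ∧ z t < z' t := by
  have := coop_pos γ α hγ hα (fun t => v' t - v t) (fun t => p' t - p t) (fun t => w' t - w t)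
    (fun t => z' t - z t) (fun t => h (v' t) - h (v t))
    (fun t => (H'.dv t).sub (H.dv t))
    (fun t => ((H'.dp t).sub (H.dp t)).congr_deriv (by ring))
    (fun t => (H'.dw t).sub (H.dw t))
    (fun t => ((H'.dz t).sub (H.dz t)).congr_deriv (by ring))
    (fun t ht => sub_nonneg.2 (hh (sub_nonneg.1 ht)))
    (sub_pos.2 e1) (sub_pos.2 e2) (sub_pos.2 e3) (sub_pos.2 e4) t ht
  simpa only [sub_pos] using this

theorem exists_family (γ α : ℝ) (hγ : 0 ≤ γ) (hα : 0 ≤ α) (h : ℝ → ℝ) (K : NNReal)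
    (hh : LipschitzWith K h) (hmono : Monotone h) (h0 : h 0 = 0) (a : ℝ) (ha : 0 ≤ a) :
    ∃ v p w z : ℝ → ℝ → ℝ, (∀ s, Sys γ α h (v s) (p s) (w s) (z s)) ∧
      (∀ s, v s 0 = a ∧ p s 0 = 0 ∧ w s 0 = s ∧ z s 0 = 0) ∧
      Continuous (fun q : ℝ × ℝ => v q.1 q.2) ∧ Continuous (fun q : ℝ × ℝ => p q.1 q.2) ∧
      Continuous (fun q : ℝ × ℝ => w q.1 q.2) ∧ Continuous (fun q : ℝ × ℝ => z q.1 q.2) ∧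
      (∀ s s' t, s ≤ s' → 0 ≤ t → p s t ≤ p s' t) ∧
      (∀ s t, 0 ≤ s → 0 ≤ t → 0 ≤ p s t ∧ 0 ≤ w s t) := by
  obtain ⟨K', hK'⟩ := vf_lip γ α h K hh
  obtain ⟨Φ, hΦ0, hΦd, hΦc⟩ := exists_flow _ K' hK'
  have hsys := fun x => Sys.of_hasDerivAt (hΦd x)
  have hmon : ∀ x y : ℝ × ℝ × ℝ × ℝ, x.1 ≤ y.1 → x.2.1 ≤ y.2.1 → x.2.2.1 ≤ y.2.2.1 →
      x.2.2.2 ≤ y.2.2.2 → ∀ t, 0 ≤ t → (Φ x t).2.1 ≤ (Φ y t).2.1 ∧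
        (Φ x t).2.2.1 ≤ (Φ y t).2.2.1 := by
    intro x y e1 e2 e3 e4 t ht
    have hlim : Tendsto (fun ε : ℝ => Φ (y + (ε, ε, ε, ε)) t) (nhdsWithin 0 (Ioi 0))
        (nhds (Φ y t)) := by
      have hc : Continuous (fun ε : ℝ => Φ (y + (ε, ε, ε, ε)) t) :=
        hΦc.comp (f := fun ε : ℝ => (y + (ε, ε, ε, ε), t)) (by fun_prop)
      have := hc.tendsto 0
      have e : y + ((0 : ℝ), (0 : ℝ), (0 : ℝ), (0 : ℝ)) = y := add_zero y
      rw [e] at this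
      exact this.mono_left nhdsWithin_le_nhds
    have hev : ∀ᶠ ε : ℝ in nhdsWithin 0 (Ioi 0), (Φ x t).2.1 ≤ (Φ (y + (ε, ε, ε, ε)) t).2.1 ∧
        (Φ x t).2.2.1 ≤ (Φ (y + (ε, ε, ε, ε)) t).2.2.1 := by
      filter_upwards [self_mem_nhdsWithin] with ε hε
      have hε : 0 < ε := hε
      have := Sys.mono hγ hα hmono (hsys x) (hsys (y + (ε, ε, ε, ε)))
        (by simp only [hΦ0, Prod.fst_add]; linarith)
        (by simp only [hΦ0, Prod.fst_add, Prod.snd_add]; linarith)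
        (by simp only [hΦ0, Prod.fst_add, Prod.snd_add]; linarith)
        (by simp only [hΦ0, Prod.snd_add]; linarith) t ht
      exact ⟨this.2.1.le, this.2.2.1.le⟩
    have c2 : Continuous (fun x : ℝ × ℝ × ℝ × ℝ => x.2.1) := by fun_prop
    have c3 : Continuous (fun x : ℝ × ℝ × ℝ × ℝ => x.2.2.1) := by fun_prop
    exact ⟨ge_of_tendsto ((c2.tendsto _).comp hlim) (hev.mono fun _ h => h.1),
      ge_of_tendsto ((c3.tendsto _).comp hlim) (hev.mono fun _ h => h.2)⟩
  have hcs : Continuous (fun q : ℝ × ℝ => Φ (a, 0, q.1, 0) q.2) :=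
    hΦc.comp (f := fun q : ℝ × ℝ => ((a, (0 : ℝ), q.1, (0 : ℝ)), q.2)) (by fun_prop)
  have hz : ∀ t, Φ 0 t = 0 := by
    have H0 : Sys γ α h (fun _ => 0) (fun _ => 0) (fun _ => 0) (fun _ => 0) :=
      ⟨fun t => hasDerivAt_const _ _, fun t => by simpa using hasDerivAt_const t (0 : ℝ),
        fun t => hasDerivAt_const _ _, fun t => by simpa [h0] using hasDerivAt_const t (0 : ℝ)⟩
    have := Sys.unique K hh (hsys 0) H0 0 (by simp [hΦ0]) (by simp [hΦ0]) (by simp [hΦ0])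
      (by simp [hΦ0])
    intro t
    exact Prod.ext (congrFun this.1 t) (Prod.ext (congrFun this.2.1 t)
      (Prod.ext (congrFun this.2.2.1 t) (congrFun this.2.2.2 t)))
  refine ⟨fun s t => (Φ (a, 0, s, 0) t).1, fun s t => (Φ (a, 0, s, 0) t).2.1,
    fun s t => (Φ (a, 0, s, 0) t).2.2.1, fun s t => (Φ (a, 0, s, 0) t).2.2.2,
    fun s => hsys _, fun s => by simp [hΦ0], by fun_prop, by fun_prop, by fun_prop, by fun_prop,
    ?_, ?_⟩
  · intro s s' t hs ht
    exact (hmon (a, 0, s, 0) (a, 0, s', 0) le_rfl le_rfl hs le_rfl t ht).1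
  · intro s t hs ht
    have := hmon 0 (a, 0, s, 0) ha le_rfl hs le_rfl t ht
    rw [hz] at this
    exact this

theorem energy_bound {γ α a s M T : ℝ} {h v p w z F : ℝ → ℝ} (H : Sys γ α h v p w z)
    (hF : ∀ x, HasDerivAt F (α * γ * x - h x) x) (hFa : F a = 0)
    (hFM : ∀ x, M ≤ x → F x < -((γ * a) ^ 2 / 2))
    (e1 : v 0 = a) (e2 : p 0 = 0) (e3 : w 0 = s) (hs : -(γ * a) ≤ s) (hs' : s ≤ 0)
    (hT : p T = 0) : v T < M := by
  by_contra hcon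
  have h1 := hFM _ (not_lt.1 hcon)
  let E : ℝ → ℝ := fun t => p t * (z t + γ * p t) - (w t + γ * v t) ^ 2 / 2
    - (α + γ) / 2 * p t ^ 2 + F (v t)
  have hE : ∀ t, HasDerivAt E 0 t := by
    intro t
    have d1 := (H.dp t).mul ((H.dz t).add ((H.dp t).const_mul γ))
    have d2 := (((H.dw t).add ((H.dv t).const_mul γ)).pow 2).div_const 2
    have d3 := ((H.dp t).pow 2).const_mul ((α + γ) / 2)
    have d4 := (hF (v t)).comp t (H.dv t)
    have := ((d1.sub d2).sub d3).add d4
    exact this.congr_deriv (by simp; ring)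
  have hc := is_const_of_deriv_eq_zero (fun t => (hE t).differentiableAt)
    (fun t => (hE t).deriv) T 0
  simp only [E, hT, e1, e2, e3, hFa] at hc
  nlinarith [sq_nonneg (w T + γ * v T)]

theorem no_escape {γ α a a₀ M : ℝ} (hγ : 0 < γ) (hα : 0 < α) (ha : 0 < a)
    {h v p w z : ℝ → ℝ} (hcont : Continuous h) (H : Sys γ α h v p w z)
    (h1 : h a < α * γ * a) (h2 : ∀ x, a ≤ x → x ≤ a₀ → h x ≤ α * γ * x)
    (h3 : ∀ m, a₀ < m → ∃ κ > 0, ∀ x, m ≤ x → α * γ * x + κ ≤ h x)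
    (e1 : v 0 = a) (e2 : p 0 = 0) (e4 : z 0 = 0)
    (hp : ∀ t, 0 ≤ t → 0 ≤ p t) (hM : ∀ t, 0 ≤ t → v t ≤ M) : False := by
  have hvm : MonotoneOn v (Ici 0) := by
    apply monotoneOn_of_deriv_nonneg (convex_Ici _)
    · exact fun t _ => (H.dv t).continuousAt.continuousWithinAt
    · exact fun t _ => (H.dv t).differentiableAt.differentiableWithinAt
    · intro t ht
      rw [interior_Ici] at ht
      rw [(H.dv t).deriv]
      exact hp t (le_of_lt ht)
  have hva : ∀ t, 0 ≤ t → a ≤ v t := fun t ht => e1 ▸ hvm (mem_Ici.2 le_rfl) (mem_Ici.2 ht) ht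
  have hvc : Continuous v := continuous_iff_continuousAt.2 fun t => (H.dv t).continuousAt
  have dy : ∀ t, HasDerivAt (fun t => z t - α * p t) (h (v t) - α * γ * v t) t := fun t =>
    ((H.dz t).sub ((H.dp t).const_mul α)).congr_deriv (by ring)
  have dx : ∀ t, HasDerivAt (fun t => w t - α * v t) (z t - α * p t) t := fun t =>
    (H.dw t).sub ((H.dv t).const_mul α)
  by_cases hcase : ∀ t, 0 ≤ t → v t ≤ a₀
  · have hc' : Continuous fun t => h (v t) - α * γ * v t := by fun_prop
    have hev : ∀ᶠ t in nhds (0 : ℝ), h (v t) - α * γ * v t < 0 := by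
      apply hc'.continuousAt.eventually_lt_const
      simp only [e1]; linarith
    obtain ⟨δ, hδ, hδ'⟩ := Metric.eventually_nhds_iff.1 hev
    have hyδ := neg_of_deriv_neg _ _ dy (δ / 2) (by simp [e2, e4]) (fun t ht ht' => hδ' (by
      rw [dist_zero_right, Real.norm_of_nonneg ht.le]; linarith)) (δ / 2) (by positivity) le_rfl
    have hya : AntitoneOn (fun t => z t - α * p t) (Ici 0) := by
      apply antitoneOn_of_deriv_nonpos (convex_Ici _)
      · exact fun t _ => (dy t).continuousAt.continuousWithinAt
      · exact fun t _ => (dy t).differentiableAt.differentiableWithinAt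
      · intro t ht
        rw [interior_Ici] at ht
        rw [(dy t).deriv]
        have ht : 0 ≤ t := le_of_lt ht
        linarith [h2 _ (hva t ht) (hcase t ht)]
    have hx := tendsto_top_of_deriv _ _ (fun t => (dx t).neg) _ (neg_pos.2 hyδ) (by
      filter_upwards [eventually_ge_atTop (δ / 2)] with t ht
      exact neg_le_neg (hya (mem_Ici.2 (by positivity)) (mem_Ici.2 (by linarith)) ht))
    have hpp := tendsto_top_of_deriv _ _ (fun t => (H.dp t).neg) 1 one_pos (by
      filter_upwards [eventually_ge_atTop 0, hx.eventually_ge_atTop (1 + (α + γ) * M)] with t ht hxt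
      have h4 := mul_le_mul_of_nonneg_left (hM t ht) (by positivity : 0 ≤ α + γ)
      simp only [Pi.neg_apply] at hxt
      nlinarith)
    obtain ⟨t, ht, ht'⟩ := ((eventually_ge_atTop 0).and (hpp.eventually_ge_atTop 1)).exists
    have := hp t ht
    simp only [Pi.neg_apply] at ht'
    linarith
  · push Not at hcase
    obtain ⟨t1, ht1, hvt1⟩ := hcase
    obtain ⟨κ, hκ, hκ'⟩ := h3 _ hvt1
    have hy := tendsto_top_of_deriv _ _ dy κ hκ (by
      filter_upwards [eventually_ge_atTop t1] with t ht
      have := hκ' (v t) (hvm (mem_Ici.2 ht1) (mem_Ici.2 (ht1.trans ht)) ht)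
      linarith)
    have hx := tendsto_top_of_deriv _ _ dx 1 one_pos (hy.eventually_ge_atTop 1)
    have hpp := tendsto_top_of_deriv _ _ H.dp 1 one_pos (by
      filter_upwards [eventually_ge_atTop 0, hx.eventually_ge_atTop 1] with t ht hxt
      have h4 := mul_nonneg (by positivity : 0 ≤ α + γ) (ha.le.trans (hva t ht))
      nlinarith)
    have hvv := tendsto_top_of_deriv _ _ H.dv 1 one_pos (hpp.eventually_ge_atTop 1)
    obtain ⟨t, ht, ht'⟩ := ((eventually_ge_atTop 0).and (hvv.eventually_ge_atTop (M + 1))).exists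
    have := hM t ht
    linarith

theorem shoot {γ α a a₀ M : ℝ} (hγ : 0 < γ) (hα : 0 < α) (ha : 0 < a)
    {h F : ℝ → ℝ} (K : NNReal) (hh : LipschitzWith K h) (hmono : Monotone h) (h0 : h 0 = 0)
    (h1 : h a < α * γ * a) (h2 : ∀ x, a ≤ x → x ≤ a₀ → h x ≤ α * γ * x)
    (h3 : ∀ m, a₀ < m → ∃ κ > 0, ∀ x, m ≤ x → α * γ * x + κ ≤ h x)
    (hF : ∀ x, HasDerivAt F (α * γ * x - h x) x) (hFa : F a = 0)
    (hFM : ∀ x, M ≤ x → F x < -((γ * a) ^ 2 / 2)) :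
    ∃ (v p w z : ℝ → ℝ) (T : ℝ), Sys γ α h v p w z ∧ v 0 = a ∧ p 0 = 0 ∧ z 0 = 0 ∧ 0 < T ∧
      (∀ t, 0 < t → t < T → 0 < p t) ∧ p T = 0 ∧ z T = 0 ∧ v T < M := by
  obtain ⟨v, p, w, z, H, e, cv, cp, cw, cz, hpm, hpos⟩ :=
    exists_family γ α hγ.le hα.le h K hh hmono h0 a ha.le
  have e1 := fun s => (e s).1
  have e2 := fun s => (e s).2.1
  have e3 := fun s => (e s).2.2.1
  have e4 := fun s => (e s).2.2.2
  have hcont : Continuous h := hh.continuous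
  have pcs : ∀ s, Continuous (p s) := fun s => cp.comp (f := fun t => (s, t)) (by fun_prop)
  have zcs : ∀ s, Continuous (z s) := fun s => cz.comp (f := fun t => (s, t)) (by fun_prop)
  have pct : ∀ t, Continuous (fun s => p s t) := fun t => cp.comp (f := fun s => (s, t)) (by fun_prop)
  have vct : ∀ t, Continuous (fun s => v s t) := fun t => cv.comp (f := fun s => (s, t)) (by fun_prop)
  set s0 : ℝ := -(γ * a) with hs0
  let Good : ℝ → ℝ → Prop := fun s T => 0 < T ∧ (∀ t, 0 < t → t < T → 0 < p s t) ∧ p s T = 0 ∧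
    z s T < 0
  let S : Set ℝ := {s | s0 < s ∧ ∃ T, Good s T}
  -- elements of `S` are negative
  have hSneg : ∀ s ∈ S, s < 0 := by
    rintro s ⟨-, T, hT, -, hpT, -⟩
    by_contra hs
    have hs := not_lt.1 hs
    have hva : ∀ t, 0 ≤ t → a ≤ v s t := by
      have hvm : MonotoneOn (v s) (Ici 0) := by
        apply monotoneOn_of_deriv_nonneg (convex_Ici _)
        · exact fun t _ => ((H s).dv t).continuousAt.continuousWithinAt
        · exact fun t _ => ((H s).dv t).differentiableAt.differentiableWithinAt
        · intro t ht
          rw [interior_Ici] at ht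
          rw [((H s).dv t).deriv]
          exact (hpos s t hs (le_of_lt ht)).1
      exact fun t ht => e1 s ▸ hvm (mem_Ici.2 le_rfl) (mem_Ici.2 ht) ht
    have := neg_of_deriv_neg _ _ (fun t => ((H s).dp t).neg) T (by simp [e2]) (fun t ht _ => by
      have q1 := (hpos s t hs ht.le).2
      have q2 := mul_le_mul_of_nonneg_left (hva t ht.le) hγ.le
      have q3 := mul_pos hγ ha
      linarith) T hT le_rfl
    simp [hpT] at this
  have hSbdd : BddAbove S := ⟨0, fun s hs => (hSneg s hs).le⟩
  -- `S` is nonempty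
  have hSne : S.Nonempty := by
    have c1 : Continuous fun q : ℝ × ℝ => α * w q.1 q.2 + h (v q.1 q.2) := by fun_prop
    have c2 : Continuous fun q : ℝ × ℝ => α * w q.1 q.2 + h (v q.1 q.2) +
      γ * (w q.1 q.2 + γ * v q.1 q.2) := by fun_prop
    have ev1 : ∀ᶠ q in nhds (s0, (0 : ℝ)), α * w q.1 q.2 + h (v q.1 q.2) < 0 := by
      apply c1.continuousAt.eventually_lt_const
      simp only [e1, e3, hs0]; linarith
    have ev2 : ∀ᶠ q in nhds (s0, (0 : ℝ)), α * w q.1 q.2 + h (v q.1 q.2) +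
      γ * (w q.1 q.2 + γ * v q.1 q.2) < 0 := by
      apply c2.continuousAt.eventually_lt_const
      simp only [e1, e3, hs0]; linarith
    obtain ⟨δ, hδ, hδ'⟩ := Metric.eventually_nhds_iff.1 (ev1.and ev2)
    have hd : ∀ s t, |s - s0| < δ → |t| < δ → dist (s, t) (s0, (0 : ℝ)) < δ := by
      intro s t hs ht
      rw [Prod.dist_eq, max_lt_iff, Real.dist_eq, Real.dist_eq, sub_zero]
      exact ⟨hs, ht⟩
    set δ' := δ / 2 with hδ'd
    have hδ'p : 0 < δ' := by positivity
    have hzneg : ∀ s, |s - s0| < δ → ∀ t, 0 < t → t ≤ δ' → z s t < 0 := by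
      intro s hs
      refine neg_of_deriv_neg _ _ (H s).dz δ' (e4 s) fun t ht ht' => ?_
      exact (hδ' (hd s t hs (by rw [abs_of_pos ht]; linarith))).1
    have hp3 : ∀ t, HasDerivAt (fun t => z s0 t + γ * p s0 t) (α * w s0 t + h (v s0 t) +
        γ * (w s0 t + γ * v s0 t)) t := fun t => ((H s0).dz t).add (((H s0).dp t).const_mul γ)
    have hp2 : ∀ t, HasDerivAt (fun t => w s0 t + γ * v s0 t) (z s0 t + γ * p s0 t) t := fun t =>
      ((H s0).dw t).add (((H s0).dv t).const_mul γ)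
    have n1 := neg_of_deriv_neg _ _ hp3 δ' (by simp [e4, e2]) fun t ht ht' =>
      (hδ' (hd s0 t (by simpa using hδ) (by rw [abs_of_pos ht]; linarith))).2
    have n2 := neg_of_deriv_neg _ _ hp2 δ' (by simp [e1, e3, hs0]) fun t ht ht' => n1 t ht ht'.le
    have n3 := neg_of_deriv_neg _ _ (H s0).dp δ' (e2 s0) fun t ht ht' => n2 t ht ht'.le
    have n4 := n3 δ' hδ'p le_rfl
    have ev3 : ∀ᶠ s in nhds s0, p s δ' < 0 := (pct δ').continuousAt.eventually_lt_const n4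
    obtain ⟨ε, hε, hε'⟩ := Metric.eventually_nhds_iff.1 ev3
    set s := s0 + min δ ε / 2 with hs
    have hmin : 0 < min δ ε := lt_min hδ hε
    have hss0 : s0 < s := by linarith
    have habs : |s - s0| < min δ ε := by
      rw [abs_of_pos (by linarith)]; linarith
    have hpsδ : p s δ' < 0 := hε' (by rw [Real.dist_eq]; exact habs.trans_le (min_le_right _ _))
    -- `p s` is positive just after 0
    have hstart : ∃ t0, 0 < t0 ∧ t0 < δ' ∧ ∀ t, 0 < t → t < t0 → 0 < p s t := by
      have c3 : Continuous fun t => w s t + γ * v s t :=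
        (cw.comp (f := fun t => (s, t)) (by fun_prop)).add
          ((cv.comp (f := fun t => (s, t)) (by fun_prop)).const_mul γ)
      have ev4 : ∀ᶠ t in nhds (0 : ℝ), 0 < w s t + γ * v s t := by
        apply c3.continuousAt.eventually_const_lt
        simp only [e1, e3]; linarith
      obtain ⟨η, hη, hη'⟩ := Metric.eventually_nhds_iff.1 ev4
      refine ⟨min η δ' / 2, by positivity, ?_, ?_⟩
      · have := min_le_right η δ'; linarith
      · intro t ht ht'
        have := neg_of_deriv_neg _ _ (fun t => ((H s).dp t).neg) t (by simp [e2])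
          (fun r hr hr' => neg_neg_of_pos (hη' (by
            rw [dist_zero_right, Real.norm_of_nonneg hr.le]
            have := min_le_left η δ'; linarith))) t ht le_rfl
        simpa using this
    obtain ⟨t0, ht0, ht0', ht0p⟩ := hstart
    obtain ⟨T, hT0, hT1, hpT, hpp⟩ := first_zero (p s) (pcs s) t0 δ' ht0 ht0' ht0p hpsδ
    exact ⟨s, hss0, T, ht0.trans_le hT0, hpp, hpT,
      hzneg s (habs.trans_le (min_le_left _ _)) T (ht0.trans_le hT0) hT1.le⟩
  -- the supremum
  obtain ⟨u, hum, hut, huS⟩ := exists_seq_tendsto_sSup hSne hSbdd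
  set sh := sSup S with hsh
  choose hu0 τ hτ using huS
  have hus : ∀ k, u k ≤ sh := fun k => le_csSup hSbdd ⟨hu0 k, τ k, hτ k⟩
  have hshneg : sh ≤ 0 := csSup_le hSne fun s hs => (hSneg s hs).le
  have hs0sh : s0 < sh := (hu0 0).trans_le (hus 0)
  have hτm : Monotone τ := by
    intro k l hkl
    by_contra hlt
    have hlt := not_le.1 hlt
    have q1 := (hτ k).2.1 (τ l) (hτ l).1 hlt
    have q2 := hpm _ _ (τ l) (hum hkl) (hτ l).1.le
    have q3 := (hτ l).2.2.1
    linarith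
  have hvbd : ∀ k t, 0 ≤ t → t ≤ τ k → v (u k) t ≤ M := by
    intro k t ht htk
    have q1 : v (u k) (τ k) < M := energy_bound (H (u k)) hF hFa hFM (e1 _) (e2 _) (e3 _)
      (hu0 k).le ((hus k).trans hshneg) (hτ k).2.2.1
    have q2 : MonotoneOn (v (u k)) (Icc 0 (τ k)) := by
      apply monotoneOn_of_deriv_nonneg (convex_Icc _ _)
      · exact fun t _ => ((H _).dv t).continuousAt.continuousWithinAt
      · exact fun t _ => ((H _).dv t).differentiableAt.differentiableWithinAt
      · intro t ht
        rw [interior_Icc] at ht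
        rw [((H _).dv t).deriv]
        exact ((hτ k).2.1 t ht.1 ht.2).le
    exact (q2 ⟨ht, htk⟩ ⟨(hτ k).1.le, le_rfl⟩ htk).trans q1.le
  rcases tendsto_atTop_of_monotone hτm with htop | ⟨T, hTlim⟩
  · exfalso
    refine no_escape (M := M) hγ hα ha hcont (H sh) h1 h2 h3 (e1 _) (e2 _) (e4 _) ?_ ?_
    · intro t ht
      rcases ht.eq_or_lt with rfl | ht
      · exact (e2 sh).ge
      obtain ⟨k, hk⟩ := (htop.eventually_gt_atTop t).exists
      exact ((hτ k).2.1 t ht hk).le.trans (hpm _ _ t (hus k) ht.le)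
    · intro t ht
      have lim : Tendsto (fun k => v (u k) t) atTop (nhds (v sh t)) := ((vct t).tendsto sh).comp hut
      refine le_of_tendsto lim ?_
      filter_upwards [htop.eventually_ge_atTop t] with k hk
      exact hvbd k t ht hk
  · have hτT : ∀ k, τ k ≤ T := hτm.ge_of_tendsto hTlim
    have hT0 : 0 < T := (hτ 0).1.trans_le (hτT 0)
    have hlim : Tendsto (fun k => (u k, τ k)) atTop (nhds (sh, T)) := hut.prodMk_nhds hTlim
    have hpT : p sh T = 0 := by
      have q1 : Tendsto (fun k => p (u k) (τ k)) atTop (nhds (p sh T)) :=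
        (cp.tendsto (sh, T)).comp hlim
      refine tendsto_nhds_unique q1 ?_
      simp only [(hτ _).2.2.1]
      exact tendsto_const_nhds
    have hzT : z sh T ≤ 0 := by
      have q1 : Tendsto (fun k => z (u k) (τ k)) atTop (nhds (z sh T)) :=
        (cz.tendsto (sh, T)).comp hlim
      exact le_of_tendsto q1 (Eventually.of_forall fun k => (hτ k).2.2.2.le)
    have hpp : ∀ t, 0 < t → t < T → 0 < p sh t := by
      intro t ht htT
      obtain ⟨k, hk⟩ := (hTlim.eventually_const_lt htT).exists
      exact ((hτ k).2.1 t ht hk).trans_le (hpm _ _ t (hus k) ht.le)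
    rcases hzT.eq_or_lt with hzT | hzT
    · exact ⟨v sh, p sh, w sh, z sh, T, H sh, e1 _, e2 _, e4 _, hT0, hpp, hpT, hzT,
        energy_bound (H sh) hF hFa hFM (e1 _) (e2 _) (e3 _) hs0sh.le hshneg hpT⟩
    exfalso
    have evz : ∀ᶠ q in nhds (sh, T), z q.1 q.2 < 0 := cz.continuousAt.eventually_lt_const hzT
    obtain ⟨δ, hδ, hδ'⟩ := Metric.eventually_nhds_iff.1 evz
    -- strict turning
    have hq : w sh T + γ * v sh T < 0 := by
      by_contra hcon
      have hcon := not_lt.1 hcon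
      have dq : ∀ t, HasDerivAt (fun t => w sh t + γ * v sh t) (z sh t + γ * p sh t) t := fun t =>
        ((H sh).dw t).add (((H sh).dv t).const_mul γ)
      have cd : Continuous fun t => z sh t + γ * p sh t := (zcs sh).add ((pcs sh).const_mul γ)
      have ev : ∀ᶠ t in nhds T, z sh t + γ * p sh t < 0 := by
        apply cd.continuousAt.eventually_lt_const
        simp only [hpT]; linarith
      obtain ⟨η, hη, hη'⟩ := Metric.eventually_nhds_iff.1 ev
      set r := max (T - η / 2) (T / 2) with hr
      have hrT : r < T := max_lt (by linarith) (by linarith)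
      have hr0 : 0 < r := lt_max_of_lt_right (by linarith)
      have hrη : T - η / 2 ≤ r := le_max_left _ _
      have hanti : StrictAntiOn (fun t => w sh t + γ * v sh t) (Icc r T) := by
        apply strictAntiOn_of_deriv_neg (convex_Icc _ _)
        · exact fun t _ => (dq t).continuousAt.continuousWithinAt
        · intro t ht
          rw [interior_Icc] at ht
          rw [(dq t).deriv]
          apply hη'
          rw [Real.dist_eq, abs_lt]
          constructor <;> linarith [ht.1, ht.2]
      have hmon : StrictMonoOn (p sh) (Icc r T) := by
        apply strictMonoOn_of_deriv_pos (convex_Icc _ _)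
        · exact (pcs sh).continuousOn
        · intro t ht
          rw [interior_Icc] at ht
          rw [((H sh).dp t).deriv]
          have := hanti ⟨ht.1.le, ht.2.le⟩ ⟨hrT.le, le_rfl⟩ ht.2
          simp only at this
          linarith
      have q1 := hmon ⟨le_rfl, hrT.le⟩ ⟨hrT.le, le_rfl⟩ hrT
      have q2 := hpp r hr0 hrT
      linarith
    have cq : Continuous fun t => w sh t + γ * v sh t :=
      (cw.comp (f := fun t => (sh, t)) (by fun_prop)).add
        ((cv.comp (f := fun t => (sh, t)) (by fun_prop)).const_mul γ)
    have evq : ∀ᶠ t in nhds T, w sh t + γ * v sh t < 0 := cq.continuousAt.eventually_lt_const hq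
    obtain ⟨η, hη, hη'⟩ := Metric.eventually_nhds_iff.1 evq
    set ρ := min δ η / 2 with hρ
    have hmin : 0 < min δ η := lt_min hδ hη
    have hρ0 : 0 < ρ := by positivity
    have hρδ : ρ < δ := by have := min_le_left δ η; linarith
    have hρη : ρ < η := by have := min_le_right δ η; linarith
    have hpneg : p sh (T + ρ) < 0 := by
      have hanti : StrictAntiOn (p sh) (Icc T (T + ρ)) := by
        apply strictAntiOn_of_deriv_neg (convex_Icc _ _)
        · exact (pcs sh).continuousOn
        · intro t ht
          rw [interior_Icc] at ht
          rw [((H sh).dp t).deriv]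
          apply hη'
          rw [Real.dist_eq, abs_lt]
          constructor <;> linarith [ht.1, ht.2]
      have := hanti ⟨le_rfl, by linarith⟩ ⟨by linarith, le_rfl⟩ (by linarith : T < T + ρ)
      linarith
    have evp : ∀ᶠ s in nhds sh, p s (T + ρ) < 0 :=
      (pct (T + ρ)).continuousAt.eventually_lt_const hpneg
    obtain ⟨ε, hε, hε'⟩ := Metric.eventually_nhds_iff.1 evp
    set s := sh + min δ ε / 2 with hs
    have hmin' : 0 < min δ ε := lt_min hδ hε
    have hss : sh < s := by linarith
    have habs : |s - sh| < min δ ε := by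
      rw [abs_of_pos (by linarith)]; linarith
    obtain ⟨T', hT'0, hT'1, hpT', hpp'⟩ := first_zero (p s) (pcs s) T (T + ρ) hT0 (by linarith)
      (fun t ht ht' => (hpp t ht ht').trans_le (hpm _ _ t hss.le ht.le))
      (hε' (by rw [Real.dist_eq]; exact habs.trans_le (min_le_right _ _)))
    have hmem : s ∈ S := ⟨hs0sh.trans hss, T', hT0.trans_le hT'0, hpp', hpT', by
      refine hδ' (y := (s, T')) ?_
      rw [Prod.dist_eq, max_lt_iff, Real.dist_eq, Real.dist_eq]
      refine ⟨habs.trans_le (min_le_left _ _), ?_⟩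
      rw [abs_lt]
      constructor <;> linarith⟩
    exact absurd (le_csSup hSbdd hmem) (not_le.2 hss)

theorem Sys.reflect {γ α : ℝ} {h v p w z : ℝ → ℝ} (K : NNReal) (hh : LipschitzWith K h)
    (H : Sys γ α h v p w z) (c : ℝ) (hp : p c = 0) (hz : z c = 0) (t : ℝ) :
    v (2 * c - t) = v t := by
  have hd : ∀ f : ℝ → ℝ, ∀ f' : ℝ → ℝ, (∀ t, HasDerivAt f (f' t) t) →
      ∀ t, HasDerivAt (fun t => f (2 * c - t)) (-(f' (2 * c - t))) t := by
    intro f f' hf t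
    have h1 : HasDerivAt (fun t : ℝ => 2 * c - t) (-1) t := (hasDerivAt_id t).const_sub (2 * c)
    exact ((hf (2 * c - t)).comp t h1).congr_deriv (by ring)
  have H' : Sys γ α h (fun t => v (2 * c - t)) (fun t => -p (2 * c - t)) (fun t => w (2 * c - t))
      (fun t => -z (2 * c - t)) :=
    ⟨hd _ _ H.dv, fun t => (hd _ _ H.dp t).neg.congr_deriv (by ring), hd _ _ H.dw,
      fun t => (hd _ _ H.dz t).neg.congr_deriv (by ring)⟩
  have e : 2 * c - c = c := by ring
  have := Sys.unique K hh H' H c (by simp only [e]) (by simp only [e, hp, neg_zero])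
    (by simp only [e]) (by simp only [e, hz, neg_zero])
  exact congrFun this.1 t

theorem finish {γ α a M T : ℝ} {h g v p w z : ℝ → ℝ} (K : NNReal) (hh : LipschitzWith K h)
    (H : Sys γ α h v p w z) (ha : 0 < a) (hgh : ∀ x, a ≤ x → x ≤ M → h x = g x)
    (e1 : v 0 = a) (e2 : p 0 = 0) (e4 : z 0 = 0) (hT : 0 < T)
    (hpp : ∀ t, 0 < t → t < T → 0 < p t) (hpT : p T = 0) (hzT : z T = 0) (hM : v T < M) :
    ∃ (v : ℝ → ℝ) (L : ℝ), 0 < L ∧ ContDiff ℝ 4 v ∧ (∀ t, 0 < v t) ∧ IsSol (α + γ) (α * γ) g v ∧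
      (∀ t, v (t + L) = v t) ∧ (∀ t, v (-t) = v t) ∧ (∀ t, v t ≤ v 0) ∧
      (∀ t, a ≤ v t) ∧ v (L / 2) = a ∧ StrictAntiOn v (Set.Icc 0 (L / 2)) ∧
      (⨅ t : ℝ, v t) = a ∧ ∃ M : ℝ, ∀ t, v t ≤ M := by
  have r0 : ∀ t, v (-t) = v t := fun t => by simpa using H.reflect K hh 0 e2 e4 t
  have r1 : ∀ t, v (2 * T - t) = v t := fun t => H.reflect K hh T hpT hzT t
  have hper : ∀ t, v (t + 2 * T) = v t := fun t => by
    rw [← r1, ← r0 t]; congr 1; ring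
  have hmon : StrictMonoOn v (Icc 0 T) := by
    apply strictMonoOn_of_deriv_pos (convex_Icc _ _)
    · exact fun t _ => (H.dv t).continuousAt.continuousWithinAt
    · intro t ht
      rw [interior_Icc] at ht
      rw [(H.dv t).deriv]
      exact hpp t ht.1 ht.2
  have hrange : ∀ t, a ≤ v t ∧ v t ≤ v T := by
    intro t
    have hP : Function.Periodic v (2 * T) := hper
    obtain ⟨y, hy, hty⟩ := hP.exists_mem_Ico (by positivity) t (-T)
    have habs : v y = v |y| := by
      rcases abs_choice y with h | h <;> rw [h]
      rw [r0]
    have hm : |y| ∈ Icc 0 T := ⟨abs_nonneg _, abs_le.2 ⟨hy.1, by linarith [hy.2]⟩⟩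
    rw [hty, habs]
    constructor
    · rw [← e1]; exact hmon.monotoneOn ⟨le_rfl, hT.le⟩ hm hm.1
    · exact hmon.monotoneOn hm ⟨hT.le, le_rfl⟩ hm.2
  have hs : ∀ f f' : ℝ → ℝ, (∀ t, HasDerivAt f (f' t) t) →
      ∀ t, HasDerivAt (fun t => f (t + T)) (f' (t + T)) t := by
    intro f f' hf t
    exact (hf (t + T)).comp_add_const t T
  let u0 : ℝ → ℝ := fun t => v (t + T)
  let u1 : ℝ → ℝ := fun t => p (t + T)
  let u2 : ℝ → ℝ := fun t => w (t + T) + γ * v (t + T)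
  let u3 : ℝ → ℝ := fun t => z (t + T) + γ * p (t + T)
  let u4 : ℝ → ℝ := fun t => α * w (t + T) + h (v (t + T)) + γ * (w (t + T) + γ * v (t + T))
  have d0 : ∀ t, HasDerivAt u0 (u1 t) t := hs _ _ H.dv
  have d1 : ∀ t, HasDerivAt u1 (u2 t) t := hs _ _ H.dp
  have d2 : ∀ t, HasDerivAt u2 (u3 t) t := fun t =>
    (hs _ _ H.dw t).add ((hs _ _ H.dv t).const_mul γ)
  have d3 : ∀ t, HasDerivAt u3 (u4 t) t := fun t =>
    (hs _ _ H.dz t).add ((hs _ _ H.dp t).const_mul γ)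
  have vc : Continuous v := continuous_iff_continuousAt.2 fun t => (H.dv t).continuousAt
  have wc : Continuous w := continuous_iff_continuousAt.2 fun t => (H.dw t).continuousAt
  have hc := hh.continuous
  have c4 : Continuous u4 := by fun_prop
  have i0 : iteratedDeriv 0 u0 = u0 := iteratedDeriv_zero
  have i1 : iteratedDeriv 1 u0 = u1 := by
    rw [iteratedDeriv_succ, i0]; exact funext fun t => (d0 t).deriv
  have i2 : iteratedDeriv 2 u0 = u2 := by
    rw [iteratedDeriv_succ, i1]; exact funext fun t => (d1 t).deriv
  have i3 : iteratedDeriv 3 u0 = u3 := by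
    rw [iteratedDeriv_succ, i2]; exact funext fun t => (d2 t).deriv
  have i4 : iteratedDeriv 4 u0 = u4 := by
    rw [iteratedDeriv_succ, i3]; exact funext fun t => (d3 t).deriv
  have hanti : StrictAntiOn u0 (Icc 0 T) := by
    intro x hx y hy hxy
    have hx' : u0 x = v (T - x) := by
      show v (x + T) = _
      rw [← r1]; congr 1; ring
    have hy' : u0 y = v (T - y) := by
      show v (y + T) = _
      rw [← r1]; congr 1; ring
    rw [hx', hy']
    exact hmon ⟨by linarith [hy.2], by linarith [hy.1]⟩ ⟨by linarith [hx.2], by linarith [hx.1]⟩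
      (by linarith)
  have hL : 2 * T / 2 = T := by ring
  have huT : u0 (2 * T / 2) = a := by
    rw [hL]
    show v (T + T) = a
    rw [← e1, ← r1]; congr 1; ring
  refine ⟨u0, 2 * T, by positivity, ?_, fun t => ha.trans_le (hrange _).1, ?_, ?_, ?_, ?_,
    fun t => (hrange _).1, huT, by rwa [hL], ?_, v T, fun t => (hrange _).2⟩
  · have : ContDiff ℝ ((4 : ℕ) : WithTop ℕ∞) u0 := by
      rw [contDiff_nat_iff_iteratedDeriv]
      constructor
      · intro m hm
        interval_cases m
        · rw [i0]; exact continuous_iff_continuousAt.2 fun t => (d0 t).continuousAt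
        · rw [i1]; exact continuous_iff_continuousAt.2 fun t => (d1 t).continuousAt
        · rw [i2]; exact continuous_iff_continuousAt.2 fun t => (d2 t).continuousAt
        · rw [i3]; exact continuous_iff_continuousAt.2 fun t => (d3 t).continuousAt
        · rw [i4]; exact c4
      · intro m hm
        interval_cases m
        · rw [i0]; exact fun t => (d0 t).differentiableAt
        · rw [i1]; exact fun t => (d1 t).differentiableAt
        · rw [i2]; exact fun t => (d2 t).differentiableAt
        · rw [i3]; exact fun t => (d3 t).differentiableAt
    exact_mod_cast this
  · intro t
    rw [i4, i2]
    have := hgh (v (t + T)) (hrange _).1 ((hrange _).2.trans hM.le)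
    simp only [u4, u2, u0]
    rw [← this]
    ring
  · intro t
    show v (t + 2 * T + T) = v (t + T)
    rw [← hper (t + T)]; congr 1; ring
  · intro t
    show v (-t + T) = v (t + T)
    rw [← r1]; congr 1; ring
  · intro t
    show v (t + T) ≤ v (0 + T)
    rw [zero_add]; exact (hrange _).2
  · apply le_antisymm
    · have := ciInf_le (f := u0) ⟨a, by rintro _ ⟨t, rfl⟩; exact (hrange _).1⟩ (2 * T / 2)
      rwa [huT] at this
    · exact le_ciInf fun t => (hrange _).1

theorem trunc (g : ℝ → ℝ) (hC : ContDiffOn ℝ 1 g (Ioi 0)) (hpos : ∀ t > 0, 0 < g t)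
    (hder : ∀ t > 0, g t / t < deriv g t) (α γ a a₀ : ℝ) (hα : 0 < α) (hγ : 0 < γ) (ha : 0 < a)
    (haa₀ : a < a₀) (hga₀ : g a₀ = α * γ * a₀) :
    ∃ (M : ℝ) (h F : ℝ → ℝ) (K : NNReal), LipschitzWith K h ∧ Monotone h ∧ h 0 = 0 ∧
      h a < α * γ * a ∧ (∀ x, a ≤ x → x ≤ a₀ → h x ≤ α * γ * x) ∧
      (∀ m, a₀ < m → ∃ κ > 0, ∀ x, m ≤ x → α * γ * x + κ ≤ h x) ∧
      (∀ x, HasDerivAt F (α * γ * x - h x) x) ∧ F a = 0 ∧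
      (∀ x, M ≤ x → F x < -((γ * a) ^ 2 / 2)) ∧ (∀ x, a ≤ x → x ≤ M → h x = g x) := by
  set B := α * γ with hB
  have hBpos : 0 < B := mul_pos hα hγ
  have ha₀ : 0 < a₀ := ha.trans haa₀
  have hdiff : ∀ t > 0, HasDerivAt g (deriv g t) t := fun t ht =>
    ((hC.contDiffAt (Ioi_mem_nhds ht)).differentiableAt (by norm_num)).hasDerivAt
  have hgm : MonotoneOn g (Ioi 0) := by
    apply monotoneOn_of_deriv_nonneg (convex_Ioi _)
    · exact hC.continuousOn
    · rw [interior_Ioi]; exact fun t ht => (hdiff t ht).differentiableAt.differentiableWithinAt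
    · rw [interior_Ioi]
      intro t ht
      have ht : 0 < t := ht
      exact ((div_pos (hpos t ht) ht).trans (hder t ht)).le
  have hqm : StrictMonoOn (fun t => g t / t) (Ioi 0) := by
    have hd : ∀ t > 0, HasDerivAt (fun t => g t / t) ((deriv g t * t - g t * 1) / t ^ 2) t :=
      fun t ht => (hdiff t ht).div (hasDerivAt_id t) ht.ne'
    apply strictMonoOn_of_deriv_pos (convex_Ioi _)
    · exact fun t ht => (hd t ht).continuousAt.continuousWithinAt
    · rw [interior_Ioi]
      intro t ht
      have ht : 0 < t := ht
      rw [(hd t ht).deriv]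
      have := hder t ht
      rw [div_lt_iff₀ ht] at this
      apply div_pos _ (by positivity)
      linarith
  have hq0 : g a₀ / a₀ = B := by rw [hga₀]; field_simp
  have glow : ∀ x, 0 < x → x < a₀ → g x < B * x := by
    intro x hx hxa
    have := hqm (mem_Ioi.2 hx) (mem_Ioi.2 ha₀) hxa
    simp only [hq0] at this
    rwa [div_lt_iff₀ hx] at this
  have ghigh : ∀ x, a₀ < x → B * x < g x := by
    intro x hxa
    have := hqm (mem_Ioi.2 ha₀) (mem_Ioi.2 (ha₀.trans hxa)) hxa
    simp only [hq0] at this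
    rwa [lt_div_iff₀ (ha₀.trans hxa)] at this
  have ginc : ∀ m x, a₀ < m → m ≤ x → g m - B * m ≤ g x - B * x := by
    intro m x hm hmx
    have hm0 : 0 < m := ha₀.trans hm
    have hx0 : 0 < x := hm0.trans_le hmx
    have := hqm.monotoneOn (mem_Ioi.2 hm0) (mem_Ioi.2 hx0) hmx
    have e1 : g m = g m / m * m := by field_simp
    have e2 : g x = g x / x * x := by field_simp
    have h5 := ghigh m hm
    have h6 : 0 < g m / m - B := by rw [sub_pos, lt_div_iff₀ hm0]; exact h5
    rw [e1, e2]
    nlinarith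
  set m1 := a₀ + 1 with hm1
  have hm1a : a₀ < m1 := by linarith
  have hm1p : 0 < m1 := by linarith
  set κ1 := g m1 - B * m1 with hκ1
  have hκ1p : 0 < κ1 := sub_pos.2 (ghigh m1 hm1a)
  set M := m1 + (B * m1 * m1 + (γ * a) ^ 2 / 2 + 1) / κ1 with hM
  have hMm : m1 < M := by
    have : 0 < (B * m1 * m1 + (γ * a) ^ 2 / 2 + 1) / κ1 := by positivity
    linarith
  have haM : a ≤ M := by linarith
  have hMa₀ : a₀ < M := by linarith
  let cl : ℝ → ℝ := fun x => max a (min x M)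
  have hcl : ∀ x, cl x ∈ Icc a M := fun x => ⟨le_max_left _ _, max_le haM (min_le_right _ _)⟩
  have hclid : ∀ x, a ≤ x → x ≤ M → cl x = x := fun x h1 h2 => by
    simp only [cl, min_eq_left h2, max_eq_right h1]
  let h : ℝ → ℝ := fun x => g (cl x) + (g a / a) * min (x - a) 0 + B * max (x - M) 0
  have hk1 : 0 < g a / a := div_pos (hpos a ha) ha
  have hhid : ∀ x, a ≤ x → x ≤ M → h x = g x := by
    intro x h1 h2
    simp only [h, hclid x h1 h2, min_eq_right (sub_nonneg.2 h1), max_eq_right (sub_nonpos.2 h2)]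
    ring
  have hhM : ∀ x, M ≤ x → h x = g M + B * (x - M) := by
    intro x hx
    have : cl x = M := by simp only [cl, min_eq_right hx, max_eq_right haM]
    simp only [h, this, min_eq_right (sub_nonneg.2 (haM.trans hx)), max_eq_left (sub_nonneg.2 hx)]
    ring
  have hmono : Monotone h := by
    intro x y hxy
    have h1 : g (cl x) ≤ g (cl y) := hgm (mem_Ioi.2 (ha.trans_le (hcl x).1))
      (mem_Ioi.2 (ha.trans_le (hcl y).1)) (max_le_max le_rfl (min_le_min hxy le_rfl))
    have h2 : min (x - a) 0 ≤ min (y - a) 0 := min_le_min (by linarith) le_rfl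
    have h3 : max (x - M) 0 ≤ max (y - M) 0 := max_le_max (by linarith) le_rfl
    have h4 := mul_le_mul_of_nonneg_left h2 hk1.le
    have h5 := mul_le_mul_of_nonneg_left h3 hBpos.le
    simp only [h]
    linarith
  have hh0 : h 0 = 0 := by
    have : cl 0 = a := by
      simp only [cl]
      rw [min_eq_left (by linarith), max_eq_left ha.le]
    simp only [h, this]
    rw [min_eq_left (by linarith), max_eq_right (by linarith)]
    field_simp
    ring
  have hlip : ∃ K, LipschitzWith K h := by
    obtain ⟨C, hCb⟩ : ∃ C, ∀ t ∈ Icc a M, ‖deriv g t‖ ≤ C := by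
      apply isCompact_Icc.exists_bound_of_continuousOn
      have := hC.continuousOn_deriv_of_isOpen isOpen_Ioi le_rfl
      exact this.mono fun t ht => mem_Ioi.2 (ha.trans_le ht.1)
    have l1 : LipschitzOnWith C.toNNReal g (Icc a M) := by
      apply (convex_Icc a M).lipschitzOnWith_of_nnnorm_hasDerivWithin_le (f' := deriv g)
      · exact fun t ht => (hdiff t (ha.trans_le ht.1)).hasDerivWithinAt
      · intro t ht
        rw [← NNReal.coe_le_coe, coe_nnnorm]
        exact (hCb t ht).trans (Real.le_coe_toNNReal C)
    have l2 : LipschitzWith 1 cl := (LipschitzWith.id.min_const M).const_max a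
    have l3 : LipschitzWith (C.toNNReal * 1) (fun x => g (cl x)) := by
      rw [← lipschitzOnWith_univ] at l2 ⊢
      exact l1.comp l2 fun x _ => hcl x
    have sub : ∀ c : ℝ, LipschitzWith 1 (fun x : ℝ => x - c) := fun c =>
      LipschitzWith.of_dist_le_mul fun x y => by simp
    have l4 := (lipschitzWith_smul (g a / a)).comp ((sub a).min_const 0)
    have l5 := (lipschitzWith_smul B).comp ((sub M).max_const 0)
    exact ⟨_, (l3.add l4).add l5⟩
  obtain ⟨K, hK⟩ := hlip
  have h3 : ∀ m, a₀ < m → ∃ κ > 0, ∀ x, m ≤ x → B * x + κ ≤ h x := by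
    intro m hm
    refine ⟨min (g m - B * m) (g M - B * M),
      lt_min (sub_pos.2 (ghigh m hm)) (sub_pos.2 (ghigh M hMa₀)), fun x hx => ?_⟩
    rcases le_total x M with hxM | hxM
    · rw [hhid x (by linarith) hxM]
      have := min_le_left (g m - B * m) (g M - B * M)
      linarith [ginc m x hm hx]
    · rw [hhM x hxM]
      have := min_le_right (g m - B * m) (g M - B * M)
      linarith
  let F : ℝ → ℝ := fun x => ∫ s in a..x, (B * s - h s)
  have hcF : Continuous fun s => B * s - h s := by
    have := hK.continuous
    fun_prop
  have hF : ∀ x, HasDerivAt F (B * x - h x) x := fun x =>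
    intervalIntegral.integral_hasDerivAt_right (hcF.intervalIntegrable _ _)
      hcF.aestronglyMeasurable.stronglyMeasurableAtFilter hcF.continuousAt
  have hFa : F a = 0 := by simp [F]
  have hFle : ∀ x y C : ℝ, x ≤ y → (∀ t, x ≤ t → t ≤ y → B * t - h t ≤ C) →
      F y - F x ≤ C * (y - x) := by
    intro x y C hxy hb
    exact (convex_Icc x y).image_sub_le_mul_sub_of_deriv_le
      (fun t _ => (hF t).continuousAt.continuousWithinAt)
      (fun t _ => (hF t).differentiableAt.differentiableWithinAt)
      (fun t ht => by
        rw [interior_Icc] at ht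
        rw [(hF t).deriv]
        exact hb t ht.1.le ht.2.le)
      x ⟨le_rfl, hxy⟩ y ⟨hxy, le_rfl⟩ hxy
  refine ⟨M, h, F, K, hK, hmono, hh0, ?_, ?_, h3, hF, hFa, ?_, hhid⟩
  · rw [hhid a le_rfl haM]; exact glow a ha haa₀
  · intro x hx hxa
    rw [hhid x hx (by linarith)]
    rcases hxa.eq_or_lt with rfl | hlt
    · exact hga₀.le
    · exact (glow x (ha.trans_le hx) hlt).le
  · intro x hx
    have b1 := hFle a m1 (B * m1) (by linarith) fun t ht ht' => by
      have : 0 ≤ h t := by rw [← hh0]; exact hmono (ha.le.trans ht)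
      have := mul_le_mul_of_nonneg_left ht' hBpos.le
      linarith
    have b2 := hFle m1 M (-κ1) hMm.le fun t ht ht' => by
      rw [hhid t (by linarith) ht']
      linarith [ginc m1 t hm1a ht]
    have b3 := hFle M x 0 hx fun t ht ht' => by
      rw [hhM t ht]
      linarith [ghigh M hMa₀]
    have b4 : κ1 * (M - m1) = B * m1 * m1 + (γ * a) ^ 2 / 2 + 1 := by
      rw [hM]; field_simp; ring
    have b5 : 0 < B * m1 * a := by positivity
    nlinarith

theorem stmt_2 (n : ℕ) (hn : 5 ≤ n) (g : ℝ → ℝ) (hg : CondG n g)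
    (A B : ℝ) (hA : A = ((n : ℝ) * ((n : ℝ) - 4) + 8) / 2)
    (hB : B = (n : ℝ) ^ 2 * ((n : ℝ) - 4) ^ 2 / 16)
    (a₀ : ℝ) (ha₀ : 0 < a₀) (hga₀ : g a₀ = B * a₀)
    (a : ℝ) (ha : 0 < a) (haa₀ : a < a₀) :
    ∃ (v : ℝ → ℝ) (L : ℝ), 0 < L ∧ ContDiff ℝ 4 v ∧ (∀ t, 0 < v t) ∧ IsSol A B g v ∧
      (∀ t, v (t + L) = v t) ∧ (∀ t, v (-t) = v t) ∧ (∀ t, v t ≤ v 0) ∧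
      (∀ t, a ≤ v t) ∧ v (L / 2) = a ∧ StrictAntiOn v (Set.Icc 0 (L / 2)) ∧
      (⨅ t : ℝ, v t) = a ∧ ∃ M : ℝ, ∀ t, v t ≤ M := by
  obtain ⟨hC, hpos, -, hder, -, -, -⟩ := hg
  have hn' : (5 : ℝ) ≤ n := by exact_mod_cast hn
  set α : ℝ := (n : ℝ) ^ 2 / 4 with hα
  set γ : ℝ := ((n : ℝ) - 4) ^ 2 / 4 with hγ
  have hαp : 0 < α := by positivity
  have hγp : 0 < γ := by
    have : 0 < (n : ℝ) - 4 := by linarith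
    positivity
  have hA' : A = α + γ := by rw [hA, hα, hγ]; ring
  have hB' : B = α * γ := by rw [hB, hα, hγ]; ring
  rw [hB'] at hga₀
  obtain ⟨M, h, F, K, hK, hmono, h0, h1, h2, h3, hF, hFa, hFM, hgh⟩ :=
    trunc g hC hpos (fun t ht => (hder t ht).1) α γ a a₀ hαp hγp ha haa₀ hga₀
  obtain ⟨v, p, w, z, T, H, e1, e2, e4, hT, hpp, hpT, hzT, hM⟩ :=
    shoot hγp hαp ha K hK hmono h0 h1 h2 h3 hF hFa hFM
  rw [hA', hB']
  exact finish K hK H ha hgh e1 e2 e4 hT hpp hpT hzT hM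
end
end

section
/- Let a ∈ (0, a₀) and let v, w : ℝ → ℝ be bounded C⁴ positive solutions of the ODE v''''(t) − A·v''(t) + B·v(t) = g(v(t)) with inf_{t ∈ ℝ} v(t) = inf_{t ∈ ℝ} w(t) = a. Then there exists τ ∈ ℝ such that w(t) = v(t + τ) for all t ∈ ℝ. -/
open Real Filter Set

noncomputable section

/-- A bounded solution written as a first-order system, with values in `[a, M]`. -/
structure BSol (A B a M : ℝ) (g v v1 v2 v3 : ℝ → ℝ) : Prop where
  d0 : ∀ t, HasDerivAt v (v1 t) t
  d1 : ∀ t, HasDerivAt v1 (v2 t) t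
  d2 : ∀ t, HasDerivAt v2 (v3 t) t
  d3 : ∀ t, HasDerivAt v3 (A * v2 t - B * v t + g (v t)) t
  lo : ∀ t, a ≤ v t
  hi : ∀ t, v t ≤ M

lemma BSol.shift {A B a M : ℝ} {g v v1 v2 v3 : ℝ → ℝ} (h : BSol A B a M g v v1 v2 v3) (c : ℝ) :
    BSol A B a M g (fun t => v (t + c)) (fun t => v1 (t + c)) (fun t => v2 (t + c))
      (fun t => v3 (t + c)) where
  d0 t := (h.d0 (t + c)).comp_add_const t c
  d1 t := (h.d1 (t + c)).comp_add_const t c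
  d2 t := (h.d2 (t + c)).comp_add_const t c
  d3 t := (h.d3 (t + c)).comp_add_const t c
  lo _ := h.lo _
  hi _ := h.hi _

lemma hasDerivAt_refl {f : ℝ → ℝ} {f' c t : ℝ} (h : HasDerivAt f f' (c - t)) :
    HasDerivAt (fun t => f (c - t)) (-f') t := by
  have := h.comp_const_sub c t
  simpa using this

lemma BSol.reflect {A B a M : ℝ} {g v v1 v2 v3 : ℝ → ℝ} (h : BSol A B a M g v v1 v2 v3) (c : ℝ) :
    BSol A B a M g (fun t => v (c - t)) (fun t => -v1 (c - t)) (fun t => v2 (c - t))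
      (fun t => -v3 (c - t)) where
  d0 t := hasDerivAt_refl (h.d0 (c - t))
  d1 t := (hasDerivAt_refl (h.d1 (c - t))).neg.congr_deriv (neg_neg _)
  d2 t := hasDerivAt_refl (h.d2 (c - t))
  d3 t := (hasDerivAt_refl (h.d3 (c - t))).neg.congr_deriv (neg_neg _)
  lo _ := h.lo _
  hi _ := h.hi _

lemma hasDerivAt_minsq (x : ℝ) : HasDerivAt (fun y : ℝ => (min y 0) ^ 2) (2 * min x 0) x := by
  rcases lt_trichotomy x 0 with hx | hx | hx
  · have h1 : HasDerivAt (fun y : ℝ => y ^ 2) (2 * x) x := by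
      simpa using hasDerivAt_pow 2 x
    rw [min_eq_left hx.le]
    refine h1.congr_of_eventuallyEq ?_
    filter_upwards [Iio_mem_nhds hx] with y hy
    rw [min_eq_left (le_of_lt hy)]
  · subst hx
    have h1 : HasDerivAt (fun y : ℝ => y ^ 2) 0 0 := by
      simpa using hasDerivAt_pow 2 (0:ℝ)
    simp only [min_self, mul_zero]
    rw [hasDerivAt_iff_isLittleO] at h1 ⊢
    refine Asymptotics.IsBigO.trans_isLittleO (Asymptotics.IsBigO.of_bound 1 ?_) h1
    filter_upwards with y
    simp only [min_self, smul_zero, sub_zero, Real.norm_eq_abs, one_mul]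
    norm_num
    rcases le_total y 0 with h | h
    · rw [min_eq_left h]
    · rw [min_eq_right h]; nlinarith [sq_nonneg y]
  · rw [min_eq_right hx.le, mul_zero]
    refine (hasDerivAt_const x (0:ℝ)).congr_of_eventuallyEq ?_
    filter_upwards [Ioi_mem_nhds hx] with y hy
    rw [min_eq_right (le_of_lt hy)]; norm_num

lemma min_mul_le (x y : ℝ) : min x 0 * y ≤ min x 0 * min y 0 :=
  mul_le_mul_of_nonpos_left (min_le_left _ _) (min_le_right _ _)

/-- Cooperative system: nonnegative initial data stay nonnegative. -/
lemma coop {l m L : ℝ} (hl : 0 ≤ l) (hm : 0 ≤ m) (hL : 0 ≤ L) {x p y q h : ℝ → ℝ}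
    (dx : ∀ t, HasDerivAt x (p t) t) (dp : ∀ t, HasDerivAt p (m * x t + y t) t)
    (dy : ∀ t, HasDerivAt y (q t) t) (dq : ∀ t, HasDerivAt q (l * y t + h t) t)
    (hh : ∀ t, L * min (x t) 0 ≤ h t)
    (x0 : 0 ≤ x 0) (p0 : 0 ≤ p 0) (y0 : 0 ≤ y 0) (q0 : 0 ≤ q 0) :
    ∀ t, 0 ≤ t → 0 ≤ x t ∧ 0 ≤ p t ∧ 0 ≤ y t ∧ 0 ≤ q t := by
  set C : ℝ := 2 + m + l + L with hC
  set E : ℝ → ℝ := fun t => (min (x t) 0) ^ 2 + (min (p t) 0) ^ 2 + (min (y t) 0) ^ 2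
    + (min (q t) 0) ^ 2 with hE
  have dE : ∀ t, HasDerivAt E (2 * min (x t) 0 * p t + 2 * min (p t) 0 * (m * x t + y t)
      + 2 * min (y t) 0 * q t + 2 * min (q t) 0 * (l * y t + h t)) t := fun t =>
    ((((hasDerivAt_minsq (x t)).comp t (dx t)).add ((hasDerivAt_minsq (p t)).comp t (dp t))).add
      ((hasDerivAt_minsq (y t)).comp t (dy t))).add ((hasDerivAt_minsq (q t)).comp t (dq t))
  have bE : ∀ t, 2 * min (x t) 0 * p t + 2 * min (p t) 0 * (m * x t + y t)
      + 2 * min (y t) 0 * q t + 2 * min (q t) 0 * (l * y t + h t) ≤ C * E t := by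
    intro t
    have h1 := min_mul_le (x t) (p t)
    have h2 := mul_le_mul_of_nonneg_left (min_mul_le (p t) (x t)) hm
    have h3 := min_mul_le (p t) (y t)
    have h4 := min_mul_le (y t) (q t)
    have h5 := mul_le_mul_of_nonneg_left (min_mul_le (q t) (y t)) hl
    have h6 : min (q t) 0 * h t ≤ min (q t) 0 * (L * min (x t) 0) :=
      mul_le_mul_of_nonpos_left (hh t) (min_le_right _ _)
    simp only [hE, hC]
    generalize min (x t) 0 = X at *
    generalize min (p t) 0 = P at *
    generalize min (y t) 0 = Y at *
    generalize min (q t) 0 = Q at *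
    have k1 := sq_nonneg (X - P)
    have k2 := mul_nonneg hm (sq_nonneg (X - P))
    have k3 := sq_nonneg (P - Y)
    have k4 := sq_nonneg (Y - Q)
    have k5 := mul_nonneg hl (sq_nonneg (Y - Q))
    have k6 := mul_nonneg hL (sq_nonneg (Q - X))
    have e : ∀ z : ℝ, ∀ k : ℝ, 0 ≤ k → 0 ≤ k * z ^ 2 := fun z k hk => mul_nonneg hk (sq_nonneg z)
    nlinarith [e X m hm, e X l hl, e X L hL, e P m hm, e P l hl, e P L hL, e Y m hm, e Y l hl,
      e Y L hL, e Q m hm, e Q l hl, e Q L hL, sq_nonneg X, sq_nonneg P, sq_nonneg Y, sq_nonneg Q]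
  have dF : ∀ t, HasDerivAt (fun t => E t * Real.exp (-C * t)) _ t := fun t =>
    (dE t).mul (((hasDerivAt_id t).const_mul (-C)).exp)
  have anti : Antitone (fun t => E t * Real.exp (-C * t)) := by
    refine antitone_of_deriv_nonpos (fun t => (dF t).differentiableAt) (fun t => ?_)
    rw [(dF t).deriv]
    simp only [id, mul_one]
    nlinarith [bE t, Real.exp_pos (-C * t), mul_le_mul_of_nonneg_right (bE t) (Real.exp_pos (-C * t)).le]
  intro t ht
  have h0 := anti ht
  have E0 : E 0 = 0 := by simp [hE, x0, p0, y0, q0]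
  simp only [E0, zero_mul] at h0
  have Et : E t ≤ 0 := by
    by_contra hcon
    push Not at hcon
    have := mul_pos hcon (Real.exp_pos (-C * t))
    linarith
  simp only [hE] at Et
  have a1 := sq_nonneg (min (x t) 0)
  have a2 := sq_nonneg (min (p t) 0)
  have a3 := sq_nonneg (min (y t) 0)
  have a4 := sq_nonneg (min (q t) 0)
  have key : ∀ z : ℝ, (min z 0) ^ 2 ≤ 0 → 0 ≤ z := by
    intro z hz
    have : min z 0 = 0 := by nlinarith [sq_nonneg (min z 0), pow_eq_zero_iff (two_ne_zero) |>.1 (le_antisymm hz (sq_nonneg (min z 0)))]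
    exact min_eq_right_iff.1 this
  exact ⟨key _ (by linarith), key _ (by linarith), key _ (by linarith), key _ (by linarith)⟩

/-- Lower bound of the derivative on `[0,∞)` gives lower bound for the function. -/
lemma lower_of_deriv {f f' k k' : ℝ → ℝ} (df : ∀ t, HasDerivAt f (f' t) t)
    (dk : ∀ t, HasDerivAt k (k' t) t) (h0 : k 0 ≤ f 0) (h : ∀ t, 0 ≤ t → k' t ≤ f' t) :
    ∀ t, 0 ≤ t → k t ≤ f t := by
  have mono : MonotoneOn (fun t => f t - k t) (Ici 0) := by
    refine monotoneOn_of_deriv_nonneg (convex_Ici 0)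
      (fun t _ => ((df t).sub (dk t)).continuousAt.continuousWithinAt)
      (fun t _ => ((df t).sub (dk t)).differentiableAt.differentiableWithinAt) ?_
    intro t ht
    rw [interior_Ici] at ht
    have := ((df t).sub (dk t)).deriv
    change deriv (f - k) t ≥ 0
    rw [this]
    linarith [h t (le_of_lt ht)]
  intro t ht
  have := mono (mem_Ici.2 le_rfl) (mem_Ici.2 ht) ht
  simp only at this
  linarith

/-- Half of the key lemma. -/
lemma half {l m a M L : ℝ} (hl : 0 ≤ l) (hm : 0 ≤ m) (hL : 0 ≤ L) {g : ℝ → ℝ}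
    (hg : ∀ s ∈ Icc a M, ∀ t ∈ Icc a M, L * min (s - t) 0 ≤ g s - g t)
    {v v1 v2 v3 w w1 w2 w3 : ℝ → ℝ}
    (hv : BSol (l + m) (l * m) a M g v v1 v2 v3) (hw : BSol (l + m) (l * m) a M g w w1 w2 w3)
    (e0 : v 0 = w 0) (e1 : v1 0 = w1 0) (e2 : w2 0 ≤ v2 0) (e3 : w3 0 ≤ v3 0) :
    (v2 0 = w2 0 ∧ v3 0 = w3 0) ∧ ∀ t, 0 ≤ t → w t ≤ v t := by
  have C := coop hl hm hL (x := fun t => v t - w t) (p := fun t => v1 t - w1 t)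
    (y := fun t => (v2 t - w2 t) - m * (v t - w t))
    (q := fun t => (v3 t - w3 t) - m * (v1 t - w1 t)) (h := fun t => g (v t) - g (w t))
    (fun t => (hv.d0 t).sub (hw.d0 t))
    (fun t => ((hv.d1 t).sub (hw.d1 t)).congr_deriv (by ring))
    (fun t => ((hv.d2 t).sub (hw.d2 t)).sub (((hv.d0 t).sub (hw.d0 t)).const_mul m))
    (fun t => (((hv.d3 t).sub (hw.d3 t)).sub (((hv.d1 t).sub (hw.d1 t)).const_mul m)).congr_deriv
      (by ring))
    (fun t => hg _ ⟨hv.lo t, hv.hi t⟩ _ ⟨hw.lo t, hw.hi t⟩)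
    (by simp [e0]) (by simp [e1]) (by simp [e0, e2]) (by simp [e1, e3])
  refine ⟨?_, fun t ht => by linarith [(C t ht).1]⟩
  set a2 := v2 0 - w2 0 with ha2
  set a3 := v3 0 - w3 0 with ha3
  have hx : ∀ t, 0 ≤ t → min (v t - w t) 0 = 0 := fun t ht => min_eq_right (C t ht).1
  -- lower bounds
  have b3 : ∀ t, 0 ≤ t → a3 ≤ (v3 t - w3 t) - m * (v1 t - w1 t) := by
    refine lower_of_deriv (f' := fun t => l * ((v2 t - w2 t) - m * (v t - w t)) + (g (v t) - g (w t)))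
      (k := fun _ => a3) (k' := fun _ => 0)
      (fun t => (((hv.d3 t).sub (hw.d3 t)).sub (((hv.d1 t).sub (hw.d1 t)).const_mul m)).congr_deriv
      (by ring)) (fun t => hasDerivAt_const t a3) (by simp [e1, ha3]) ?_
    intro t ht
    have := hg _ ⟨hv.lo t, hv.hi t⟩ _ ⟨hw.lo t, hw.hi t⟩
    rw [hx t ht, mul_zero] at this
    have h2 := mul_nonneg hl (C t ht).2.2.1
    linarith
  have b2 : ∀ t, 0 ≤ t → a2 + a3 * t ≤ (v2 t - w2 t) - m * (v t - w t) := by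
    refine lower_of_deriv (k := fun t => a2 + a3 * t) (k' := fun _ => a3)
      (fun t => ((hv.d2 t).sub (hw.d2 t)).sub (((hv.d0 t).sub (hw.d0 t)).const_mul m))
      (fun t => (((hasDerivAt_id t).const_mul a3).const_add a2).congr_deriv (by simp))
      (by simp [e0, ha2]) b3
  have b1 : ∀ t, 0 ≤ t → a2 * t + a3 * t ^ 2 / 2 ≤ v1 t - w1 t := by
    refine lower_of_deriv (k := fun t => a2 * t + a3 * t ^ 2 / 2) (k' := fun t => a2 + a3 * t)
      (fun t => (hv.d1 t).sub (hw.d1 t))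
      (fun t => (((hasDerivAt_id t).const_mul a2).add
        (((hasDerivAt_pow 2 t).const_mul a3).div_const 2)).congr_deriv (by simp; ring))
      (by simp [e1]) ?_
    intro t ht
    have h2 := mul_nonneg hm (C t ht).1
    linarith [b2 t ht]
  have b0 : ∀ t, 0 ≤ t → a2 * t ^ 2 / 2 + a3 * t ^ 3 / 6 ≤ v t - w t := by
    refine lower_of_deriv (k := fun t => a2 * t ^ 2 / 2 + a3 * t ^ 3 / 6)
      (k' := fun t => a2 * t + a3 * t ^ 2 / 2)
      (fun t => (hv.d0 t).sub (hw.d0 t))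
      (fun t => ((((hasDerivAt_pow 2 t).const_mul a2).div_const 2).add
        (((hasDerivAt_pow 3 t).const_mul a3).div_const 6)).congr_deriv (by simp; ring))
      (by simp [e0]) b1
  have n2 : 0 ≤ a2 := by simp only [ha2]; linarith
  have n3 : 0 ≤ a3 := by simp only [ha3]; linarith
  have z : a2 + a3 ≤ 0 := by
    by_contra hcon
    push Not at hcon
    have hMa : a ≤ M := (hv.lo 0).trans (hv.hi 0)
    set s := a2 + a3 with hs
    set T := 1 + 6 * (M - a + 1) / s with hT
    have hr : 0 ≤ 6 * (M - a + 1) / s := by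
      apply div_nonneg _ hcon.le; linarith
    have hT1 : 1 ≤ T := by linarith
    have h1 := b0 T (by linarith)
    have h2 := hv.hi T
    have h3 := hw.lo T
    have h4 : s * T = s + 6 * (M - a + 1) := by rw [hT]; field_simp
    have h5 : a2 * T ≤ a2 * T ^ 2 := mul_le_mul_of_nonneg_left (by nlinarith) n2
    have h6 : a3 * T ≤ a3 * T ^ 3 := mul_le_mul_of_nonneg_left (by nlinarith [sq_nonneg T, mul_nonneg (sub_nonneg.2 hT1) (sq_nonneg T)]) n3
    have h7 : 0 ≤ a2 * T ^ 2 := mul_nonneg n2 (sq_nonneg T)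
    have h8 : s * T = a2 * T + a3 * T := by rw [hs]; ring
    linarith
  constructor
  · simp only [ha2, ha3] at *; linarith
  · simp only [ha2, ha3] at *; linarith

/-- Key uniqueness: bounded solutions are determined by `(v 0, v' 0)`. -/
lemma uniq_pos {l m a M L : ℝ} (hl : 0 ≤ l) (hm : 0 ≤ m) (hL : 0 ≤ L) {g : ℝ → ℝ}
    (hg : ∀ s ∈ Icc a M, ∀ t ∈ Icc a M, L * min (s - t) 0 ≤ g s - g t)
    {v v1 v2 v3 w w1 w2 w3 : ℝ → ℝ}
    (hv : BSol (l + m) (l * m) a M g v v1 v2 v3) (hw : BSol (l + m) (l * m) a M g w w1 w2 w3)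
    (e0 : v 0 = w 0) (e1 : v1 0 = w1 0) : ∀ t, v t = w t := by
  have hv' := hv.reflect 0
  have hw' := hw.reflect 0
  have eqs : v2 0 = w2 0 ∧ v3 0 = w3 0 := by
    rcases le_total (w2 0) (v2 0) with h2 | h2
    · rcases le_total (w3 0) (v3 0) with h3 | h3
      · exact (half hl hm hL hg hv hw e0 e1 h2 h3).1
      · have := (half hl hm hL hg hv' hw' (by simpa using e0) (by simpa using e1) (by simpa using h2)
          (by simpa using h3)).1
        simpa using this
    · rcases le_total (w3 0) (v3 0) with h3 | h3
      · have := (half hl hm hL hg hw' hv' (by simpa using e0.symm) (by simpa using e1.symm)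
          (by simpa using h2) (by simpa using h3)).1
        simp only [sub_zero, neg_inj] at this
        exact ⟨this.1.symm, this.2.symm⟩
      · have := (half hl hm hL hg hw hv e0.symm e1.symm h2 h3).1
        exact ⟨this.1.symm, this.2.symm⟩
  obtain ⟨e2, e3⟩ := eqs
  intro t
  rcases le_total 0 t with ht | ht
  · exact le_antisymm ((half hl hm hL hg hw hv e0.symm e1.symm e2.le e3.le).2 t ht)
      ((half hl hm hL hg hv hw e0 e1 e2.ge e3.ge).2 t ht)
  · have h1 := (half hl hm hL hg hw' hv' (by simp [e0]) (by simp [e1]) (by simp [e2])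
      (by simp [e3])).2 (-t) (by linarith)
    have h2 := (half hl hm hL hg hv' hw' (by simp [e0]) (by simp [e1]) (by simp [e2])
      (by simp [e3])).2 (-t) (by linarith)
    simp only [zero_sub, neg_neg] at h1 h2
    exact le_antisymm h1 h2

/-- Derivative eventually below a negative constant forces divergence to `-∞`. -/
lemma to_bot {f f' : ℝ → ℝ} (df : ∀ t, HasDerivAt f (f' t) t) {c : ℝ} (hc : 0 < c)
    (h : ∀ᶠ t in atTop, f' t ≤ -c) : Tendsto f atTop atBot := by
  obtain ⟨T, hT⟩ := eventually_atTop.1 h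
  have key : ∀ᶠ t in atTop, f t ≤ f T + c * T + (-c) * t := by
    filter_upwards [eventually_ge_atTop T] with t ht
    have anti : AntitoneOn (fun t => f t + c * t) (Ici T) := by
      have dd : ∀ t, HasDerivAt (fun t => f t + c * t) (f' t + c) t := fun t =>
        ((df t).add ((hasDerivAt_id t).const_mul c)).congr_deriv (by simp)
      refine antitoneOn_of_deriv_nonpos (convex_Ici T)
        (fun t _ => (dd t).continuousAt.continuousWithinAt)
        (fun t _ => (dd t).differentiableAt.differentiableWithinAt) ?_
      intro t ht
      rw [interior_Ici] at ht
      rw [(dd t).deriv]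
      linarith [hT t (le_of_lt ht)]
    have := anti (mem_Ici.2 le_rfl) (mem_Ici.2 ht) ht
    simp only at this
    linarith
  refine tendsto_atBot_mono' _ key ?_
  exact tendsto_atBot_add_const_left _ _ (tendsto_id.const_mul_atTop_of_neg (by linarith))

/-- A bounded solution cannot tend to a non-equilibrium value with `g a < B a`. -/
lemma no_limit {A B a M : ℝ} (hA : 0 ≤ A) {g v v1 v2 v3 : ℝ → ℝ}
    (hv : BSol A B a M g v v1 v2 v3) (hga : g a < B * a) (hcont : ContinuousAt g a) :
    ¬ Tendsto v atTop (nhds a) := by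
  intro hlim
  have h1 : Tendsto (fun t => g (v t) - B * v t) atTop (nhds (g a - B * a)) :=
    (hcont.tendsto.comp hlim).sub (hlim.const_mul B)
  have h2 : ∀ᶠ t in atTop, g (v t) - B * v t ≤ -((B * a - g a) / 2) :=
    (h1.eventually_lt_const (u := -((B * a - g a) / 2)) (by linarith)).mono fun t ht => ht.le
  have h3 : Tendsto (fun t => v3 t - A * v1 t) atTop atBot :=
    to_bot (f' := fun t => g (v t) - B * v t)
      (fun t => ((hv.d3 t).sub ((hv.d1 t).const_mul A)).congr_deriv (by ring))
      (c := (B * a - g a) / 2) (by linarith) h2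
  have h4 : Tendsto (fun t => v2 t - A * v t) atTop atBot :=
    to_bot (fun t => (hv.d2 t).sub ((hv.d0 t).const_mul A)) one_pos
      (h3.eventually_le_atBot (-1))
  have h5 : Tendsto v1 atTop atBot := by
    refine to_bot hv.d1 one_pos ?_
    filter_upwards [h4.eventually_le_atBot (-1 - A * M)] with t ht
    have := mul_le_mul_of_nonneg_left (hv.hi t) hA
    linarith
  have h6 : Tendsto v atTop atBot := to_bot hv.d0 one_pos (h5.eventually_le_atBot (-1))
  obtain ⟨t, ht⟩ := (h6.eventually_le_atBot (a - 1)).exists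
  linarith [hv.lo t]

/-- A function whose derivative does not vanish on `(s, ∞)`, valued in `[a, M]`, has a limit. -/
lemma exists_limit {a M s : ℝ} {v v1 : ℝ → ℝ} (d : ∀ t, HasDerivAt v (v1 t) t)
    (lo : ∀ t, a ≤ v t) (hi : ∀ t, v t ≤ M) (hne : ∀ t, s < t → v1 t ≠ 0) :
    ∃ b, Tendsto v atTop (nhds b) := by
  have hs := hasDerivWithinAt_forall_lt_or_forall_gt_of_forall_ne (convex_Ioi s)
    (fun t _ => (d t).hasDerivWithinAt) (m := 0) (fun t ht => hne t ht)
  have cont : ∀ t, ContinuousAt v t := fun t => (d t).continuousAt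
  -- reduce to a globally monotone function
  have eqv : v =ᶠ[atTop] fun t => v (max t s) := by
    filter_upwards [eventually_ge_atTop s] with t ht
    rw [max_eq_left ht]
  rcases hs with hs | hs
  · have : AntitoneOn v (Ici s) := by
      refine antitoneOn_of_deriv_nonpos (convex_Ici s) (fun t _ => (cont t).continuousWithinAt)
        (fun t _ => (d t).differentiableAt.differentiableWithinAt) ?_
      intro t ht
      rw [interior_Ici] at ht
      rw [(d t).deriv]; exact (hs t ht).le
    have anti : Antitone fun t => v (max t s) := fun t u htu =>
      this (mem_Ici.2 (le_max_right _ _)) (mem_Ici.2 (le_max_right _ _)) (max_le_max_right s htu)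
    exact ⟨_, (tendsto_atTop_ciInf anti ⟨a, by rintro _ ⟨t, rfl⟩; exact lo _⟩).congr' eqv.symm⟩
  · have : MonotoneOn v (Ici s) := by
      refine monotoneOn_of_deriv_nonneg (convex_Ici s) (fun t _ => (cont t).continuousWithinAt)
        (fun t _ => (d t).differentiableAt.differentiableWithinAt) ?_
      intro t ht
      rw [interior_Ici] at ht
      rw [(d t).deriv]; exact (hs t ht).le
    have mono : Monotone fun t => v (max t s) := fun t u htu =>
      this (mem_Ici.2 (le_max_right _ _)) (mem_Ici.2 (le_max_right _ _)) (max_le_max_right s htu)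
    exact ⟨_, (tendsto_atTop_ciSup mono ⟨M, by rintro _ ⟨t, rfl⟩; exact hi _⟩).congr' eqv.symm⟩

/-- The infimum is attained. -/
lemma attained {l m a M L : ℝ} (hl : 0 ≤ l) (hm : 0 ≤ m) (hL : 0 ≤ L) {g : ℝ → ℝ}
    (hg : ∀ s ∈ Icc a M, ∀ t ∈ Icc a M, L * min (s - t) 0 ≤ g s - g t)
    (hga : g a < l * m * a) (hcont : ContinuousAt g a)
    {v v1 v2 v3 : ℝ → ℝ} (hv : BSol (l + m) (l * m) a M g v v1 v2 v3)
    (hinf : (⨅ t, v t) = a) : ∃ t, v t = a ∧ v1 t = 0 := by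
  have vc : Continuous v := continuous_iff_continuousAt.2 fun t => (hv.d0 t).continuousAt
  suffices h : ∃ t, v t = a by
    obtain ⟨t, ht⟩ := h
    refine ⟨t, ht, ?_⟩
    have : IsLocalMin v t := Filter.Eventually.of_forall fun s => by rw [ht]; exact hv.lo s
    exact this.hasDerivAt_eq_zero (hv.d0 t)
  -- symmetry about critical points
  have symm : ∀ s, v1 s = 0 → ∀ t, v (t + s) = v (s - t) := by
    intro s hs
    exact uniq_pos hl hm hL hg (hv.shift s) (hv.reflect s) (by simp) (by simp [hs])
  by_cases hcrit : ∃ s r, s ≠ r ∧ v1 s = 0 ∧ v1 r = 0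
  · obtain ⟨s, r, hsr, h1, h2⟩ := hcrit
    have per : Function.Periodic v (2 * (r - s)) := by
      intro t
      have e1 := symm r h2 (t - 2 * s + r)
      have e2 := symm s h1 (t - s)
      rw [show t + 2 * (r - s) = t - 2 * s + r + r by ring, e1,
        show r - (t - 2 * s + r) = s - (t - s) by ring, ← e2]
      congr 1; ring
    have hc : IsCompact (range v) := per.compact_of_continuous
      (mul_ne_zero two_ne_zero (sub_ne_zero.2 hsr.symm)) vc
    have := hc.sInf_mem (range_nonempty v)
    obtain ⟨t, ht⟩ := this
    exact ⟨t, by rw [ht]; exact hinf⟩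
  · push Not at hcrit
    -- at most one critical point
    obtain ⟨S, hS⟩ : ∃ S : ℝ, ∀ t, v1 t = 0 → t = S := by
      by_cases h : ∃ S, v1 S = 0
      · obtain ⟨S, hS⟩ := h
        refine ⟨S, fun t ht => ?_⟩
        by_contra hne
        exact hcrit t S hne ht hS
      · push Not at h
        exact ⟨0, fun t ht => absurd ht (h t)⟩
    obtain ⟨b, hb⟩ := exists_limit (s := S) hv.d0 hv.lo hv.hi
      (fun t ht h0 => absurd (hS t h0) ht.ne')
    have hv' := hv.reflect 0
    obtain ⟨b', hb'⟩ := exists_limit (s := -S) hv'.d0 hv'.lo hv'.hi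
      (fun t ht h0 => by
        have := hS (0 - t) (by simpa using h0)
        linarith)
    have hab : a < b := lt_of_le_of_ne (ge_of_tendsto' hb hv.lo) (by
      rintro rfl; exact no_limit (add_nonneg hl hm) hv hga hcont hb)
    have hab' : a < b' := lt_of_le_of_ne (ge_of_tendsto' hb' hv'.lo) (by
      rintro rfl; exact no_limit (add_nonneg hl hm) hv' hga hcont hb')
    set e := min b b' with he
    have hae : a < e := lt_min hab hab'
    obtain ⟨T, hT⟩ := eventually_atTop.1
      (hb.eventually_const_lt (u := (a + e) / 2) (by linarith [min_le_left b b']))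
    obtain ⟨T', hT'⟩ := eventually_atTop.1
      (hb'.eventually_const_lt (u := (a + e) / 2) (by linarith [min_le_right b b']))
    set R := max (max T T') 0 with hR
    have hR1 : T ≤ R := (le_max_left _ _).trans (le_max_left _ _)
    have hR2 : T' ≤ R := (le_max_right _ _).trans (le_max_left _ _)
    have hR0 : 0 ≤ R := le_max_right _ _
    obtain ⟨t0, ht0, hmin⟩ := isCompact_Icc.exists_isMinOn (s := Icc (-R) R)
      ⟨0, by constructor <;> linarith⟩ vc.continuousOn
    refine ⟨t0, ?_⟩
    by_contra hne
    have hgt : a < v t0 := lt_of_le_of_ne (hv.lo t0) (Ne.symm hne)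
    have : min (v t0) ((a + e) / 2) ≤ ⨅ t, v t := by
      refine le_ciInf fun t => ?_
      by_cases h1 : R < t
      · exact (min_le_right _ _).trans (hT t (by linarith)).le
      by_cases h2 : t < -R
      · have := hT' (-t) (by linarith)
        simp only [zero_sub, neg_neg] at this
        exact (min_le_right _ _).trans this.le
      · exact (min_le_left _ _).trans (hmin ⟨by linarith, by linarith⟩)
    rw [hinf] at this
    have h3 : a < min (v t0) ((a + e) / 2) := lt_min hgt (by linarith)
    linarith

lemma mk_bsol {A B a M : ℝ} {g v : ℝ → ℝ} (h4 : ContDiff ℝ 4 v) (hs : IsSol A B g v)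
    (lo : ∀ t, a ≤ v t) (hi : ∀ t, v t ≤ M) :
    BSol A B a M g v (iteratedDeriv 1 v) (iteratedDeriv 2 v) (iteratedDeriv 3 v) := by
  have key : ∀ k : ℕ, k < 4 → ∀ t, HasDerivAt (iteratedDeriv k v) (iteratedDeriv (k + 1) v t) t := by
    intro k hk t
    have : Differentiable ℝ (iteratedDeriv k v) :=
      h4.differentiable_iteratedDeriv k (by exact_mod_cast hk)
    rw [iteratedDeriv_succ]
    exact (this t).hasDerivAt
  refine ⟨fun t => ?_, key 1 (by norm_num), key 2 (by norm_num), fun t => ?_, lo, hi⟩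
  · simpa using key 0 (by norm_num) t
  · exact (key 3 (by norm_num) t).congr_deriv (by have := hs t; linarith)

theorem stmt_3 (n : ℕ) (hn : 5 ≤ n) (g : ℝ → ℝ) (hg : CondG n g)
    (A B : ℝ) (hA : A = ((n : ℝ) * ((n : ℝ) - 4) + 8) / 2)
    (hB : B = (n : ℝ) ^ 2 * ((n : ℝ) - 4) ^ 2 / 16)
    (a₀ : ℝ) (ha₀ : 0 < a₀) (hga₀ : g a₀ = B * a₀)
    (a : ℝ) (ha : 0 < a) (haa₀ : a < a₀)
    (v w : ℝ → ℝ) (hv4 : ContDiff ℝ 4 v) (hw4 : ContDiff ℝ 4 w)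
    (hvpos : ∀ t, 0 < v t) (hwpos : ∀ t, 0 < w t)
    (hvbdd : ∃ M : ℝ, ∀ t, |v t| ≤ M) (hwbdd : ∃ M : ℝ, ∀ t, |w t| ≤ M)
    (hvsol : IsSol A B g v) (hwsol : IsSol A B g w)
    (hvinf : (⨅ t : ℝ, v t) = a) (hwinf : (⨅ t : ℝ, w t) = a) :
    ∃ τ : ℝ, ∀ t, w t = v (t + τ) := by
  obtain ⟨gC, gpos, -, gder, -, -, -⟩ := hg
  have hn5 : (5:ℝ) ≤ n := by exact_mod_cast hn
  have gd : ∀ t, 0 < t → HasDerivAt g (deriv g t) t := fun t ht =>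
    (((gC.differentiableOn one_ne_zero) t ht).differentiableAt (Ioi_mem_nhds ht)).hasDerivAt
  have gcont : ∀ t, 0 < t → ContinuousAt g t := fun t ht => (gd t ht).continuousAt
  -- `g` is increasing
  have gmono : MonotoneOn g (Ioi 0) := by
    refine monotoneOn_of_deriv_nonneg (convex_Ioi 0) gC.continuousOn ?_ ?_
    · rw [interior_Ioi]; exact gC.differentiableOn one_ne_zero
    · intro t ht
      rw [interior_Ioi] at ht
      exact ((div_pos (gpos t ht) ht).trans (gder t ht).1).le
  -- `g t / t` is strictly increasing
  have gratio : StrictMonoOn (fun t => g t / t) (Ioi 0) := by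
    have dr : ∀ t, 0 < t → HasDerivAt (fun t => g t / t) ((deriv g t * t - g t * 1) / t ^ 2) t :=
      fun t ht => (gd t ht).div (hasDerivAt_id t) ht.ne'
    refine strictMonoOn_of_deriv_pos (convex_Ioi 0)
      (fun t ht => (dr t ht).continuousAt.continuousWithinAt) ?_
    intro t ht
    rw [interior_Ioi] at ht
    have ht' : 0 < t := ht
    rw [(dr t ht).deriv]
    have := (div_lt_iff₀ ht').1 (gder t ht).1
    apply div_pos _ (by positivity)
    linarith
  have hga : g a < B * a := by
    have := gratio (mem_Ioi.2 ha) (mem_Ioi.2 ha₀) haa₀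
    simp only at this
    rw [hga₀, mul_div_assoc, div_self ha₀.ne', mul_one, div_lt_iff₀ ha] at this
    exact this
  obtain ⟨M1, hM1⟩ := hvbdd
  obtain ⟨M2, hM2⟩ := hwbdd
  set M := max M1 M2 with hM
  have vlo : ∀ t, a ≤ v t := fun t => by
    rw [← hvinf]; exact ciInf_le ⟨0, by rintro _ ⟨s, rfl⟩; exact (hvpos s).le⟩ t
  have wlo : ∀ t, a ≤ w t := fun t => by
    rw [← hwinf]; exact ciInf_le ⟨0, by rintro _ ⟨s, rfl⟩; exact (hwpos s).le⟩ t
  have vhi : ∀ t, v t ≤ M := fun t => (le_abs_self _).trans ((hM1 t).trans (le_max_left _ _))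
  have whi : ∀ t, w t ≤ M := fun t => (le_abs_self _).trans ((hM2 t).trans (le_max_right _ _))
  -- Lipschitz constant
  obtain ⟨L, hL, hLip⟩ : ∃ L : ℝ, 0 ≤ L ∧
      ∀ s ∈ Icc a M, ∀ t ∈ Icc a M, L * min (s - t) 0 ≤ g s - g t := by
    have sub : Icc a M ⊆ Ioi 0 := fun t ht => lt_of_lt_of_le ha ht.1
    have dc : ContinuousOn (deriv g) (Icc a M) :=
      (gC.continuousOn_deriv_of_isOpen isOpen_Ioi le_rfl).mono sub
    obtain ⟨K, hK⟩ := isCompact_Icc.exists_bound_of_continuousOn dc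
    refine ⟨max K 0, le_max_right _ _, fun s hs t ht => ?_⟩
    rcases le_total t s with h | h
    · rw [min_eq_right (by linarith), mul_zero]
      exact sub_nonneg.2 (gmono (sub ht) (sub hs) h)
    · rw [min_eq_left (by linarith)]
      have := (convex_Icc a M).norm_image_sub_le_of_norm_hasDerivWithin_le
        (f := g) (f' := deriv g) (C := max K 0)
        (fun x hx => (gd x (sub hx)).hasDerivWithinAt)
        (fun x hx => (hK x hx).trans (le_max_left _ _)) hs ht
      rw [Real.norm_eq_abs, Real.norm_eq_abs, abs_of_nonneg (sub_nonneg.2 h)] at this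
      have := (le_abs_self _).trans this
      linarith
  set l : ℝ := (n:ℝ) ^ 2 / 4 with hl
  set m : ℝ := ((n:ℝ) - 4) ^ 2 / 4 with hm
  have hl0 : 0 ≤ l := by positivity
  have hm0 : 0 ≤ m := by positivity
  have eA : A = l + m := by rw [hA, hl, hm]; ring
  have eB : B = l * m := by rw [hB, hl, hm]; ring
  have bv := mk_bsol hv4 hvsol vlo vhi
  have bw := mk_bsol hw4 hwsol wlo whi
  rw [eA, eB] at bv bw
  rw [eB] at hga
  obtain ⟨s, hs0, hs1⟩ := attained hl0 hm0 hL hLip hga (gcont a ha) bv hvinf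
  obtain ⟨r, hr0, hr1⟩ := attained hl0 hm0 hL hLip hga (gcont a ha) bw hwinf
  have key := uniq_pos hl0 hm0 hL hLip (bw.shift r) (bv.shift s) (by simp [hs0, hr0])
    (by simp only [zero_add]; rw [hr1, hs1])
  refine ⟨s - r, fun t => ?_⟩
  have := key (t - r)
  simp only [sub_add_cancel] at this
  rw [this]; congr 1; ring
end
end

section
/- There exists a C⁴ positive solution v : ℝ → ℝ of the ODE v''''(t) − A·v''(t) + B·v(t) = g(v(t)) which is homoclinic to zero and symmetric-decreasing: v(t) → 0 as t → +∞ and as t → −∞, v(−t) = v(t) for all t ∈ ℝ, and v is nonincreasing on [0, ∞). -/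
open Real Filter Set

noncomputable section

section ode
variable {E : Type*} [NormedAddCommGroup E] [NormedSpace ℝ E] [CompleteSpace E]

lemma int_bound_pos {h : ℝ → E} (hc : Continuous h) {C l : ℝ} (hl : 0 < l) (hC : 0 ≤ C)
    (hb : ∀ s, ‖h s‖ ≤ C * exp (l * |s|)) {t : ℝ} (ht : 0 ≤ t) :
    ‖∫ s in (0:ℝ)..t, h s‖ ≤ C / l * exp (l * |t|) := by
  have h1 : ‖∫ s in (0:ℝ)..t, h s‖ ≤ ∫ s in (0:ℝ)..t, C * exp (l * s) := by
    apply intervalIntegral.norm_integral_le_of_norm_le ht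
    · refine Filter.Eventually.of_forall fun s hs => ?_
      have := hb s
      rwa [abs_of_pos hs.1] at this
    · exact (by fun_prop : Continuous fun s => C * exp (l * s)).intervalIntegrable _ _
  have h2 : ∫ s in (0:ℝ)..t, C * exp (l * s) = C / l * exp (l * t) - C / l * exp (l * 0) := by
    apply intervalIntegral.integral_eq_sub_of_hasDerivAt (f := fun s => C / l * exp (l * s))
    · intro s _
      have := (((hasDerivAt_id s).const_mul l).exp).const_mul (C / l)
      refine this.congr_deriv ?_
      simp only [id, mul_one]
      field_simp
    · exact (by fun_prop : Continuous fun s => C * exp (l * s)).intervalIntegrable _ _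
  rw [h2] at h1
  rw [abs_of_nonneg ht]
  have : 0 ≤ C / l * exp (l * 0) := by positivity
  linarith

lemma int_bound {h : ℝ → E} (hc : Continuous h) {C l : ℝ} (hl : 0 < l) (hC : 0 ≤ C)
    (hb : ∀ s, ‖h s‖ ≤ C * exp (l * |s|)) (t : ℝ) :
    ‖∫ s in (0:ℝ)..t, h s‖ ≤ C / l * exp (l * |t|) := by
  rcases le_total 0 t with ht | ht
  · exact int_bound_pos hc hl hC hb ht
  · have := int_bound_pos (h := fun s => h (-s)) (by fun_prop) hl hC
      (fun s => by simpa using hb (-s)) (t := -t) (by linarith)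
    rw [intervalIntegral.integral_comp_neg, neg_neg, neg_zero, intervalIntegral.integral_symm,
      norm_neg, abs_neg] at this
    exact this

lemma global_exists {K : NNReal} {Φ : E → E} (hΦ : LipschitzWith K Φ) (x0 : E) :
    ∃ x : ℝ → E, x 0 = x0 ∧ ∀ t, HasDerivAt x (Φ (x t)) t := by
  set l : ℝ := K + 1 with hl
  have hlpos : 0 < l := by positivity
  have hcont : Continuous Φ := hΦ.continuous
  have hin : ∀ y : BoundedContinuousFunction ℝ E,
      Continuous fun s => Φ (exp (l * |s|) • y s) := by
    intro y
    have := y.continuous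
    fun_prop
  have hPc : ∀ y : BoundedContinuousFunction ℝ E,
      Continuous fun t => exp (-(l * |t|)) • (x0 + ∫ s in (0:ℝ)..t, Φ (exp (l * |s|) • y s)) := by
    intro y
    have : Continuous fun t => ∫ s in (0:ℝ)..t, Φ (exp (l * |s|) • y s) :=
      intervalIntegral.continuous_primitive (fun a b => (hin y).intervalIntegrable _ _) 0
    fun_prop
  have hone : ∀ s : ℝ, 1 ≤ exp (l * |s|) := fun s => one_le_exp (by positivity)
  have hPb : ∀ y : BoundedContinuousFunction ℝ E, ∀ t,
      ‖exp (-(l * |t|)) • (x0 + ∫ s in (0:ℝ)..t, Φ (exp (l * |s|) • y s))‖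
        ≤ ‖x0‖ + (‖Φ 0‖ + K * ‖y‖) / l := by
    intro y t
    have h1 := int_bound (hin y) hlpos (C := ‖Φ 0‖ + K * ‖y‖) (by positivity) (by
      intro s
      have h2 : ‖Φ (exp (l * |s|) • y s) - Φ 0‖ ≤ K * ‖exp (l * |s|) • y s - 0‖ :=
        hΦ.norm_sub_le _ _
      rw [sub_zero, norm_smul, Real.norm_of_nonneg (exp_pos _).le] at h2
      have h3 := y.norm_coe_le_norm s
      have h4 := norm_le_norm_add_norm_sub' (Φ (exp (l * |s|) • y s)) (Φ 0)
      have h5 : (K:ℝ) * (exp (l * |s|) * ‖y s‖) ≤ K * (exp (l * |s|) * ‖y‖) := by gcongr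
      have h6 : ‖Φ 0‖ ≤ ‖Φ 0‖ * exp (l * |s|) :=
        le_mul_of_one_le_right (norm_nonneg _) (hone s)
      nlinarith) t
    rw [norm_smul, Real.norm_of_nonneg (exp_pos _).le, exp_neg]
    rw [inv_mul_le_iff₀ (exp_pos _)]
    have h7 := norm_add_le x0 (∫ s in (0:ℝ)..t, Φ (exp (l * |s|) • y s))
    have h6 : ‖x0‖ ≤ ‖x0‖ * exp (l * |t|) :=
        le_mul_of_one_le_right (norm_nonneg _) (hone t)
    nlinarith
  let P : BoundedContinuousFunction ℝ E → BoundedContinuousFunction ℝ E := fun y =>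
    BoundedContinuousFunction.ofNormedAddCommGroup _ (hPc y) _ (hPb y)
  have hP : ∀ y t, P y t = exp (-(l * |t|)) • (x0 + ∫ s in (0:ℝ)..t, Φ (exp (l * |s|) • y s)) :=
    fun y t => rfl
  have hcontr : ContractingWith (K / (K + 1)) P := by
    constructor
    · rw [div_lt_one (by positivity)]
      exact lt_add_one K
    · apply LipschitzWith.of_dist_le_mul
      intro y z
      rw [BoundedContinuousFunction.dist_le (by positivity)]
      intro t
      rw [hP, hP, dist_eq_norm, ← smul_sub, add_sub_add_left_eq_sub,
        ← intervalIntegral.integral_sub ((hin y).intervalIntegrable _ _)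
          ((hin z).intervalIntegrable _ _)]
      have h1 := int_bound ((hin y).sub (hin z)) hlpos (C := K * dist y z) (by positivity) (by
        intro s
        have h2 : ‖Φ (exp (l * |s|) • y s) - Φ (exp (l * |s|) • z s)‖
            ≤ K * ‖exp (l * |s|) • y s - exp (l * |s|) • z s‖ :=
          hΦ.norm_sub_le _ _
        rw [← smul_sub, norm_smul, Real.norm_of_nonneg (exp_pos _).le, ← dist_eq_norm (y s)] at h2
        have h3 := BoundedContinuousFunction.dist_coe_le_dist (f := y) (g := z) s
        have h5 : (K:ℝ) * (exp (l * |s|) * dist (y s) (z s))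
          ≤ K * (exp (l * |s|) * dist y z) := by gcongr
        calc _ ≤ _ := h2
          _ ≤ _ := h5
          _ = _ := by ring) t
      rw [norm_smul, Real.norm_of_nonneg (exp_pos _).le, exp_neg, inv_mul_le_iff₀ (exp_pos _)]
      refine h1.trans (le_of_eq ?_)
      push_cast
      rw [hl]; ring
  have hne : Nonempty (BoundedContinuousFunction ℝ E) := ⟨0⟩
  set y := ContractingWith.fixedPoint P hcontr with hy
  have hfix : P y = y := hcontr.fixedPoint_isFixedPt
  have hx : ∀ t, exp (l * |t|) • y t = x0 + ∫ s in (0:ℝ)..t, Φ (exp (l * |s|) • y s) := by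
    intro t
    conv_lhs => rw [← hfix]
    rw [hP, smul_smul, ← exp_add]
    simp
  refine ⟨fun t => exp (l * |t|) • y t, ?_, ?_⟩
  · have := hx 0
    simpa using this
  · intro t
    have h1 : HasDerivAt (fun t => x0 + ∫ s in (0:ℝ)..t, Φ (exp (l * |s|) • y s))
        (Φ (exp (l * |t|) • y t)) t :=
      ((hin y).integral_hasStrictDerivAt 0 t).hasDerivAt.const_add x0
    have h2 : (fun t => exp (l * |t|) • y t)
        = fun t => x0 + ∫ s in (0:ℝ)..t, Φ (exp (l * |s|) • y s) := funext hx
    rw [← h2] at h1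
    exact h1

/-- continuous dependence (nonneg times) -/
lemma dep_pos {K : NNReal} {Φ : E → E} (hΦ : LipschitzWith K Φ) {x y : ℝ → E}
    (hx : ∀ t, HasDerivAt x (Φ (x t)) t) (hy : ∀ t, HasDerivAt y (Φ (y t)) t)
    {t : ℝ} (ht : 0 ≤ t) : dist (x t) (y t) ≤ dist (x 0) (y 0) * exp (K * t) := by
  have := dist_le_of_trajectories_ODE (v := fun _ => Φ) (a := 0) (b := t) (fun _ => hΦ)
    (fun s _ => (hx s).continuousAt.continuousWithinAt) (fun s _ => (hx s).hasDerivWithinAt)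
    (fun s _ => (hy s).continuousAt.continuousWithinAt) (fun s _ => (hy s).hasDerivWithinAt)
    le_rfl t ⟨ht, le_rfl⟩
  simpa using this

lemma dep {K : NNReal} {Φ : E → E} (hΦ : LipschitzWith K Φ) {x y : ℝ → E}
    (hx : ∀ t, HasDerivAt x (Φ (x t)) t) (hy : ∀ t, HasDerivAt y (Φ (y t)) t)
    (t : ℝ) : dist (x t) (y t) ≤ dist (x 0) (y 0) * exp (K * |t|) := by
  rcases le_total 0 t with ht | ht
  · rw [abs_of_nonneg ht]; exact dep_pos hΦ hx hy ht
  · have key : ∀ z : ℝ → E, (∀ t, HasDerivAt z (Φ (z t)) t) →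
        ∀ t, HasDerivAt (fun t => z (-t)) (-(Φ (z (-t)))) t := by
      intro z hz t
      have := (hz (-t)).scomp t (hasDerivAt_neg t)
      simpa [Function.comp_def] using this
    have := dep_pos (Φ := fun z => -(Φ z)) hΦ.neg (key x hx) (key y hy) (t := -t) (by linarith)
    simpa [abs_of_nonpos ht] using this

end ode

lemma family {f : ℝ → ℝ} {L : NNReal} (hf : LipschitzWith L f) (A B : ℝ) {m : ℝ → ℝ}
    (hm : Continuous m) : ∃ v0 v1 v2 v3 : ℝ → ℝ → ℝ,
      (∀ a t, HasDerivAt (v0 a) (v1 a t) t) ∧ (∀ a t, HasDerivAt (v1 a) (v2 a t) t) ∧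
      (∀ a t, HasDerivAt (v2 a) (v3 a t) t) ∧
      (∀ a t, HasDerivAt (v3 a) (A * v2 a t - B * v0 a t + f (v0 a t)) t) ∧
      (∀ a, v0 a 0 = a) ∧ (∀ a, v1 a 0 = 0) ∧ (∀ a, v2 a 0 = m a) ∧ (∀ a, v3 a 0 = 0) ∧
      Continuous (fun p : ℝ × ℝ => v0 p.1 p.2) ∧ Continuous (fun p : ℝ × ℝ => v1 p.1 p.2) ∧
      Continuous (fun p : ℝ × ℝ => v2 p.1 p.2) ∧ (∀ a t, v0 a (-t) = v0 a t) := by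
  let Φ : ℝ × ℝ × ℝ × ℝ → ℝ × ℝ × ℝ × ℝ := fun p =>
    (p.2.1, p.2.2.1, p.2.2.2, A * p.2.2.1 - B * p.1 + f p.1)
  obtain ⟨K, hK⟩ : ∃ K, LipschitzWith K Φ := by
    have l1 : LipschitzWith 1 (fun p : ℝ × ℝ × ℝ × ℝ => p.1) := LipschitzWith.prod_fst
    have l2 : LipschitzWith 1 (fun p : ℝ × ℝ × ℝ × ℝ => p.2) := LipschitzWith.prod_snd
    have l3 : LipschitzWith 1 (fun p : ℝ × ℝ × ℝ => p.1) := LipschitzWith.prod_fst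
    have l4 : LipschitzWith 1 (fun p : ℝ × ℝ × ℝ => p.2) := LipschitzWith.prod_snd
    have l5 : LipschitzWith 1 (fun p : ℝ × ℝ => p.1) := LipschitzWith.prod_fst
    have l6 : LipschitzWith 1 (fun p : ℝ × ℝ => p.2) := LipschitzWith.prod_snd
    have q2 := l5.comp (l4.comp l2)
    have cA : LipschitzWith ‖A‖₊ (fun x : ℝ => A * x) := by
      simpa using lipschitzWith_smul A (β := ℝ)
    have cB : LipschitzWith ‖B‖₊ (fun x : ℝ => B * x) := by
      simpa using lipschitzWith_smul B (β := ℝ)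
    exact ⟨_, (l3.comp l2).prodMk (q2.prodMk ((l6.comp (l4.comp l2)).prodMk
      (((cA.comp q2).sub (cB.comp l1)).add (hf.comp l1))))⟩
  choose X hX0 hX using fun a : ℝ => global_exists hK ((a, 0, m a, 0) : ℝ × ℝ × ℝ × ℝ)
  have hXc : Continuous (fun p : ℝ × ℝ => X p.1 p.2) := by
    rw [continuous_iff_continuousAt]
    rintro ⟨a, t⟩
    have hc : Continuous (X a) := continuous_iff_continuousAt.2 fun s => (hX a s).continuousAt
    have hlim : Tendsto (fun p : ℝ × ℝ => dist (X p.1 0) (X a 0) * exp (K * |p.2|)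
        + dist (X a p.2) (X a t)) (nhds (a, t)) (nhds 0) := by
      have : Continuous (fun p : ℝ × ℝ => dist (X p.1 0) (X a 0) * exp (K * |p.2|)
        + dist (X a p.2) (X a t)) := by
        simp only [hX0]
        fun_prop
      have h := this.tendsto (a, t)
      simpa using h
    rw [ContinuousAt, tendsto_iff_dist_tendsto_zero]
    refine squeeze_zero (fun _ => dist_nonneg) (fun p => ?_) hlim
    exact (dist_triangle _ (X a p.2) _).trans (by
      gcongr; exact dep hK (hX p.1) (hX a) p.2)
  have d0 : ∀ a t, HasDerivAt (fun t => (X a t).1) (X a t).2.1 t := fun a t => (hX a t).fst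
  have d1 : ∀ a t, HasDerivAt (fun t => (X a t).2.1) (X a t).2.2.1 t :=
    fun a t => (hX a t).snd.fst
  have d2 : ∀ a t, HasDerivAt (fun t => (X a t).2.2.1) (X a t).2.2.2 t :=
    fun a t => (hX a t).snd.snd.fst
  have d3 : ∀ a t, HasDerivAt (fun t => (X a t).2.2.2)
      (A * (X a t).2.2.1 - B * (X a t).1 + f (X a t).1) t :=
    fun a t => (hX a t).snd.snd.snd
  refine ⟨fun a t => (X a t).1, fun a t => (X a t).2.1, fun a t => (X a t).2.2.1,
    fun a t => (X a t).2.2.2, d0, d1, d2, d3, by simp [hX0], by simp [hX0], by simp [hX0],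
    by simp [hX0], by fun_prop, by fun_prop, by fun_prop, ?_⟩
  intro a t
  have hn : ∀ {u : ℝ → ℝ} {u' : ℝ} {t : ℝ}, HasDerivAt u u' (-t) →
      HasDerivAt (fun s => u (-s)) (-u') t := by
    intro u u' t h
    have := h.comp t (hasDerivAt_neg t)
    simpa [Function.comp_def] using this
  have hY : ∀ t, HasDerivAt (fun t => ((X a (-t)).1, -(X a (-t)).2.1, (X a (-t)).2.2.1,
      -(X a (-t)).2.2.2)) (Φ ((X a (-t)).1, -(X a (-t)).2.1, (X a (-t)).2.2.1,
      -(X a (-t)).2.2.2)) t := by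
    intro t
    have e1 := (hn (d1 a (-t))).neg
    have e3 := (hn (d3 a (-t))).neg
    rw [neg_neg] at e1 e3
    exact (hn (d0 a (-t))).prodMk (e1.prodMk ((hn (d2 a (-t))).prodMk e3))
  have := dep hK hY (hX a) t
  simp only [neg_zero, hX0, dist_self, zero_mul] at this
  have h2 := dist_le_zero.1 this
  exact (Prod.ext_iff.1 h2).1


/-! ### Calculus tools -/

lemma le_of_deriv_le {φ φ' : ℝ → ℝ} (h : ∀ t, HasDerivAt φ (φ' t) t) {s t c : ℝ} (hst : s ≤ t)
    (hc : ∀ x ∈ Icc s t, φ' x ≤ c) : φ t ≤ φ s + c * (t - s) := by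
  have hanti : AntitoneOn (fun x => φ x - c * x) (Icc s t) := by
    apply antitoneOn_of_hasDerivWithinAt_nonpos (convex_Icc s t) (f' := fun x => φ' x - c * 1)
    · exact fun x _ =>
        ((h x).sub ((hasDerivAt_id x).const_mul c)).continuousAt.continuousWithinAt
    · exact fun x _ => ((h x).sub ((hasDerivAt_id x).const_mul c)).hasDerivWithinAt
    · intro x hx
      have := hc x (interior_subset hx)
      linarith
  have := hanti (left_mem_Icc.2 hst) (right_mem_Icc.2 hst) hst
  simp only at this
  linarith

lemma ge_of_deriv_ge {φ φ' : ℝ → ℝ} (h : ∀ t, HasDerivAt φ (φ' t) t) {s t c : ℝ} (hst : s ≤ t)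
    (hc : ∀ x ∈ Icc s t, c ≤ φ' x) : φ s + c * (t - s) ≤ φ t := by
  have := le_of_deriv_le (φ := fun x => -φ x) (φ' := fun x => -φ' x) (fun x => (h x).neg)
    (c := -c) hst (fun x hx => by linarith [hc x hx])
  linarith

lemma lt_of_deriv_neg {φ φ' : ℝ → ℝ} (h : ∀ t, HasDerivAt φ (φ' t) t) {s t : ℝ} (hst : s < t)
    (hc : ∀ x ∈ Ioo s t, φ' x < 0) : φ t < φ s := by
  have hanti : StrictAntiOn φ (Icc s t) := by
    apply strictAntiOn_of_deriv_neg (convex_Icc s t)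
    · exact fun x _ => (h x).continuousAt.continuousWithinAt
    · intro x hx
      rw [interior_Icc] at hx
      rw [(h x).deriv]
      exact hc x hx
  exact hanti (left_mem_Icc.2 hst.le) (right_mem_Icc.2 hst.le) hst

lemma tendsto_atBot_of_deriv {φ φ' : ℝ → ℝ} (h : ∀ t, HasDerivAt φ (φ' t) t) {c : ℝ} (hc : c < 0)
    (hev : ∀ᶠ t in atTop, φ' t ≤ c) : Tendsto φ atTop atBot := by
  obtain ⟨s, hs⟩ := eventually_atTop.1 hev
  have h1 : Tendsto (fun t => φ s + c * (t - s)) atTop atBot := by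
    apply tendsto_atBot_add_const_left
    apply Tendsto.const_mul_atTop_of_neg hc
    exact tendsto_atTop_add_const_right _ _ tendsto_id
  refine tendsto_atBot_mono' _ ?_ h1
  filter_upwards [eventually_ge_atTop s] with t ht
  exact le_of_deriv_le h ht fun x hx => hs x hx.1

lemma tendsto_atBot_of_deriv' {φ φ' : ℝ → ℝ} (h : ∀ t, HasDerivAt φ (φ' t) t)
    (hev : Tendsto φ' atTop atBot) : Tendsto φ atTop atBot :=
  tendsto_atBot_of_deriv h (c := -1) (by norm_num) (hev.eventually_le_atBot (-1))

/-- A positive continuous function that becomes nonpositive has a first zero. -/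
lemma first_zero_s4 {φ : ℝ → ℝ} (hφ : Continuous φ) (h0 : 0 < φ 0) {s : ℝ} (hs : 0 ≤ s)
    (hφs : φ s ≤ 0) : ∃ r, 0 < r ∧ r ≤ s ∧ φ r = 0 ∧ ∀ t, 0 ≤ t → t < r → 0 < φ t := by
  let S : Set ℝ := Icc 0 s ∩ φ ⁻¹' Iic 0
  have hSc : IsCompact S := isCompact_Icc.inter_right (isClosed_Iic.preimage hφ)
  have hSne : S.Nonempty := ⟨s, ⟨hs, le_rfl⟩, hφs⟩
  obtain ⟨r, ⟨⟨hr0, hrs⟩, hr⟩, hmin⟩ := hSc.exists_isLeast hSne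
  have hpos : ∀ t, 0 ≤ t → t < r → 0 < φ t := by
    intro t ht htr
    by_contra hcon
    have := hmin ⟨⟨ht, htr.le.trans hrs⟩, not_lt.1 hcon⟩
    linarith
  have hr0' : 0 < r := by
    rcases hr0.eq_or_lt with h | h
    · subst h
      simp only [mem_preimage, mem_Iic] at hr
      linarith
    · exact h
  refine ⟨r, hr0', hrs, le_antisymm hr ?_, hpos⟩
  have hcl : r ∈ closure (Ioo 0 r) := by
    rw [closure_Ioo hr0'.ne]; exact ⟨hr0, le_rfl⟩
  have : closure (Ioo 0 r) ⊆ φ ⁻¹' Ici 0 :=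
    closure_minimal (fun t ht => (hpos t ht.1.le ht.2).le) (isClosed_Ici.preimage hφ)
  exact this hcl

/-- comparison for second derivative at least k² times the function -/
lemma comparison {φ φ' φ'' : ℝ → ℝ} (h : ∀ t, HasDerivAt φ (φ' t) t)
    (h' : ∀ t, HasDerivAt φ' (φ'' t) t) {k T : ℝ}
    (hc : ∀ x ∈ Icc 0 T, k ^ 2 * φ x ≤ φ'' x) (h0 : 0 ≤ φ 0) (h0' : 0 ≤ φ' 0) (hk : 0 ≤ k) :
    ∀ t ∈ Icc 0 T, 0 ≤ φ t := by
  have e1 : ∀ t, HasDerivAt (fun t => exp (-k * t)) (exp (-k * t) * -k) t := by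
    intro t
    simpa using ((hasDerivAt_id t).const_mul (-k)).exp
  have e2 : ∀ t, HasDerivAt (fun t => exp (k * t)) (exp (k * t) * k) t := by
    intro t
    simpa using ((hasDerivAt_id t).const_mul k).exp
  have s1 : ∀ t ∈ Icc 0 T, 0 ≤ φ' t + k * φ t := by
    intro t ht
    have := ge_of_deriv_ge (c := 0) (fun t => (e1 t).mul ((h' t).add ((h t).const_mul k))) ht.1
      (by
        intro x hx
        have := hc x ⟨hx.1, hx.2.trans ht.2⟩
        have he := exp_pos (-k * x)
        simp only [Pi.add_apply]
        nlinarith)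
    simp only [Pi.mul_apply, Pi.add_apply] at this
    simp only [mul_zero, exp_zero, one_mul, zero_mul, add_zero] at this
    have h3 : 0 ≤ exp (-k * t) * (φ' t + k * φ t) := le_trans (by positivity) this
    exact nonneg_of_mul_nonneg_right h3 (exp_pos _)
  intro t ht
  have := ge_of_deriv_ge (c := 0) (fun t => (e2 t).mul (h t)) ht.1
      (by
        intro x hx
        have := s1 x ⟨hx.1, hx.2.trans ht.2⟩
        have he := exp_pos (k * x)
        nlinarith)
  simp only [Pi.mul_apply] at this
  simp only [mul_zero, exp_zero, one_mul, zero_mul, add_zero] at this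
  exact nonneg_of_mul_nonneg_right (h0.trans this) (exp_pos _)

/-! ### Analysis of one trajectory -/

structure Traj (A B : ℝ) (f v0 v1 v2 v3 : ℝ → ℝ) : Prop where
  d0 : ∀ t, HasDerivAt v0 (v1 t) t
  d1 : ∀ t, HasDerivAt v1 (v2 t) t
  d2 : ∀ t, HasDerivAt v2 (v3 t) t
  d3 : ∀ t, HasDerivAt v3 (A * v2 t - B * v0 t + f (v0 t)) t
  i1 : v1 0 = 0
  i3 : v3 0 = 0

def Crosses (v0 v1 : ℝ → ℝ) : Prop := ∃ T > 0, v0 T < 0 ∧ ∀ t ∈ Ioc 0 T, v1 t < 0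
def Turns (v0 v1 : ℝ → ℝ) : Prop := ∃ T > 0, 0 < v1 T ∧ ∀ t ∈ Icc 0 T, 0 < v0 t

lemma not_both {v0 v1 : ℝ → ℝ} (h1 : Crosses v0 v1) (h2 : Turns v0 v1) : False := by
  obtain ⟨T, hT, a, b⟩ := h1
  obtain ⟨S, hS, c, d⟩ := h2
  rcases le_total T S with h | h
  · have := d T ⟨hT.le, h⟩; linarith
  · have := b S ⟨hS, h⟩; linarith

section traj
variable {A B : ℝ} {f v0 v1 v2 v3 : ℝ → ℝ}

lemma cont_of {φ φ' : ℝ → ℝ} (h : ∀ t, HasDerivAt φ (φ' t) t) : Continuous φ :=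
  continuous_iff_continuousAt.2 fun t => (h t).continuousAt

lemma crosses_of_zero (h : Traj A B f v0 v1 v2 v3) {s : ℝ} (hs : 0 < s) (hz : v0 s = 0)
    (hneg : ∀ t ∈ Ioc 0 s, v1 t < 0) : Crosses v0 v1 := by
  have hc := cont_of h.d1
  have hev : ∀ᶠ t in nhds s, v1 t < 0 := hc.continuousAt.eventually_lt_const (hneg s ⟨hs, le_rfl⟩)
  obtain ⟨e, he, hball⟩ := Metric.eventually_nhds_iff.1 hev
  have hneg2 : ∀ t ∈ Ioc 0 (s + e / 2), v1 t < 0 := by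
    intro t ht
    rcases le_or_gt t s with h1 | h1
    · exact hneg t ⟨ht.1, h1⟩
    · apply hball
      rw [Real.dist_eq, abs_of_pos (by linarith)]
      linarith [ht.2]
  refine ⟨s + e / 2, by linarith, ?_, hneg2⟩
  rw [← hz]
  exact lt_of_deriv_neg h.d0 (by linarith) fun x hx => hneg2 x ⟨by linarith [hx.1], hx.2.le⟩

lemma crosses_of_small (h : Traj A B f v0 v1 v2 v3) (hA : 0 < A) (hpos : 0 < v0 0)
    (hm : v2 0 < 0) (hf : ∀ x ∈ Icc 0 (v0 0), f x ≤ B * x) : Crosses v0 v1 := by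
  have hc0 := cont_of h.d0
  have hc2 := cont_of h.d2
  -- main estimate
  have main : ∀ T, 0 ≤ T → (∀ t ∈ Icc 0 T, 0 ≤ v0 t) → (∀ t, 0 ≤ t → t < T → v2 t < 0) →
      v2 T ≤ v2 0 := by
    intro T hT hv hw
    have hw1 : ∀ t ∈ Icc 0 T, v2 t ≤ 0 := by
      intro t ht
      rcases eq_or_lt_of_le hT with rfl | hT'
      · have : t = 0 := le_antisymm ht.2 ht.1
        rw [this]; exact hm.le
      · have hsub : closure (Ico 0 T) ⊆ v2 ⁻¹' Iic 0 :=
          closure_minimal (fun t ht => (hw t ht.1 ht.2).le) (isClosed_Iic.preimage hc2)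
        rw [closure_Ico hT'.ne] at hsub
        exact hsub ht
    have h1 : ∀ t ∈ Icc 0 T, v1 t ≤ 0 := by
      intro t ht
      have := le_of_deriv_le h.d1 ht.1 (c := 0) fun x hx => hw1 x ⟨hx.1, hx.2.trans ht.2⟩
      rw [h.i1] at this; linarith
    have h0 : ∀ t ∈ Icc 0 T, v0 t ≤ v0 0 := by
      intro t ht
      have := le_of_deriv_le h.d0 ht.1 (c := 0) fun x hx => h1 x ⟨hx.1, hx.2.trans ht.2⟩
      linarith
    have h3 : ∀ t ∈ Icc 0 T, v3 t ≤ 0 := by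
      intro t ht
      have := le_of_deriv_le h.d3 ht.1 (c := 0) fun x hx => by
        have hx' : x ∈ Icc 0 T := ⟨hx.1, hx.2.trans ht.2⟩
        have := hf (v0 x) ⟨hv x hx', h0 x hx'⟩
        have := hw1 x hx'
        nlinarith
      rw [h.i3] at this; linarith
    have := le_of_deriv_le h.d2 hT (c := 0) h3
    linarith
  have main2 : ∀ T, 0 ≤ T → (∀ t ∈ Icc 0 T, 0 ≤ v0 t) → v2 T ≤ v2 0 := by
    intro T hT hv
    apply main T hT hv
    intro t ht htT
    by_contra hcon
    obtain ⟨r, hr0, hrt, hrz, hrn⟩ := first_zero_s4 (φ := fun t => -v2 t) hc2.neg (by linarith) ht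
      (by linarith)
    have := main r hr0.le (fun x hx => hv x ⟨hx.1, by linarith [hx.2]⟩)
      (fun x hx hxr => by linarith [hrn x hx hxr])
    linarith
  -- v0 must become nonpositive
  have hex : ∃ s, 0 ≤ s ∧ v0 s ≤ 0 := by
    by_contra hcon
    push Not at hcon
    have hb : Tendsto v1 atTop atBot := tendsto_atBot_of_deriv h.d1 hm (by
      filter_upwards [eventually_ge_atTop 0] with t ht
      exact main2 t ht fun x hx => (hcon x hx.1).le)
    have hb0 := tendsto_atBot_of_deriv' h.d0 hb
    obtain ⟨t, ht, ht'⟩ := ((hb0.eventually_le_atBot (-1)).and (eventually_ge_atTop 0)).exists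
    linarith [hcon t ht']
  obtain ⟨s, hs, hvs⟩ := hex
  obtain ⟨r, hr0, hrs, hrz, hrn⟩ := first_zero_s4 hc0 hpos hs hvs
  apply crosses_of_zero h hr0 hrz
  intro t ht
  have := le_of_deriv_le h.d1 ht.1.le (c := v2 0) fun x hx => main2 x hx.1 fun y hy => by
    rcases lt_or_eq_of_le (hy.2.trans (hx.2.trans ht.2)) with hlt | heq
    · exact (hrn y hy.1 hlt).le
    · rw [heq, hrz]
  rw [h.i1] at this
  nlinarith [ht.1]

/-- Conservation of energy. -/
lemma energy (h : Traj A B f v0 v1 v2 v3) {G : ℝ → ℝ} (hG : ∀ x, HasDerivAt G (f x) x)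
    (h0 : v2 0 ^ 2 = B * v0 0 ^ 2 - 2 * G (v0 0)) (t : ℝ) :
    2 * (v3 t * v1 t) - v2 t ^ 2 - A * v1 t ^ 2 + (B * v0 t ^ 2 - 2 * G (v0 t)) = 0 := by
  have hd : ∀ t, HasDerivAt (fun t => 2 * (v3 t * v1 t) - v2 t ^ 2 - A * v1 t ^ 2
      + (B * v0 t ^ 2 - 2 * G (v0 t))) 0 t := by
    intro t
    have := ((((((h.d3 t).mul (h.d1 t)).const_mul 2).sub ((h.d2 t).pow 2)).sub
      (((h.d1 t).pow 2).const_mul A))).add ((((h.d0 t).pow 2).const_mul B).sub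
      (((hG (v0 t)).comp t (h.d0 t)).const_mul 2))
    refine this.congr_deriv ?_
    simp
    ring
  have hcst := is_const_of_deriv_eq_zero (fun t => (hd t).differentiableAt)
    (fun t => (hd t).deriv) t 0
  rw [hcst]
  simp only [h.i1, h.i3]
  linarith

lemma pos_of_neither (h : Traj A B f v0 v1 v2 v3) {a b α₀ : ℝ} (ha : 0 < a) (hb : 0 < b)
    (hAab : A = a ^ 2 + b ^ 2) (hBab : B = a ^ 2 * b ^ 2) {G : ℝ → ℝ}
    (hE : ∀ t, 2 * (v3 t * v1 t) - v2 t ^ 2 - A * v1 t ^ 2 + (B * v0 t ^ 2 - 2 * G (v0 t)) = 0)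
    (hG0 : G 0 = 0) (hF : ∀ x, 0 < x → x < α₀ → 0 < B * x ^ 2 - 2 * G x)
    (hf0 : ∀ x, 0 ≤ f x)
    (hpos : 0 < v0 0) (hlt : v0 0 < α₀) (hn1 : ¬ Crosses v0 v1) (hn2 : ¬ Turns v0 v1) :
    ∀ t, 0 ≤ t → 0 < v0 t := by
  by_contra hcon
  push Not at hcon
  obtain ⟨s, hs, hvs⟩ := hcon
  obtain ⟨r, hr0, hrs, hrz, hrn⟩ := first_zero_s4 (cont_of h.d0) hpos hs hvs
  have hle : ∀ t, 0 < t → t < r → v1 t ≤ 0 := by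
    intro t ht htr
    by_contra hc
    exact hn2 ⟨t, ht, not_le.1 hc, fun x hx => hrn x hx.1 (hx.2.trans_lt htr)⟩
  have hle' : ∀ t ∈ Icc 0 r, v1 t ≤ 0 := by
    have hsub : closure (Ioo 0 r) ⊆ v1 ⁻¹' Iic 0 :=
      closure_minimal (fun t ht => hle t ht.1 ht.2) (isClosed_Iic.preimage (cont_of h.d1))
    rw [closure_Ioo hr0.ne] at hsub
    exact hsub
  have hv0le : ∀ t ∈ Icc 0 r, v0 t ≤ v0 0 := by
    intro t ht
    have := le_of_deriv_le h.d0 ht.1 (c := 0) fun x hx => hle' x ⟨hx.1, hx.2.trans ht.2⟩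
    linarith
  have hstrict : ∀ t, 0 < t → t < r → v1 t < 0 := by
    intro t ht htr
    refine lt_of_le_of_ne (hle t ht htr) fun heq => ?_
    have hmax : IsLocalMax v1 t := by
      filter_upwards [Ioo_mem_nhds ht htr] with x hx
      rw [heq]; exact hle x hx.1 hx.2
    have h2 : v2 t = 0 := hmax.hasDerivAt_eq_zero (h.d1 t)
    have := hE t
    rw [heq, h2] at this
    have := hF (v0 t) (hrn t ht.le htr) ((hv0le t ⟨ht.le, htr.le⟩).trans_lt hlt)
    linarith
  have h1r : v1 r = 0 := by
    refine le_antisymm (hle' r ⟨hr0.le, le_rfl⟩) ?_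
    by_contra hc
    refine hn1 (crosses_of_zero h hr0 hrz fun t ht => ?_)
    rcases lt_or_eq_of_le ht.2 with hlt' | heq
    · exact hstrict t ht.1 hlt'
    · rw [heq]; exact not_le.1 hc
  have h2r : v2 r = 0 := by
    have := hE r
    rw [h1r, hrz, hG0] at this
    nlinarith
  have h3r : v3 r ≤ 0 := by
    by_contra hc
    push Not at hc
    -- v2 < 0 just to the left of r
    have hev : ∀ᶠ t in nhds r, 0 < v3 t :=
      (cont_of h.d3).continuousAt.eventually_const_lt hc
    obtain ⟨e, he, hball⟩ := Metric.eventually_nhds_iff.1 hev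
    set q := max (r - e / 2) (r / 2) with hq
    have hq1 : r - e / 2 ≤ q := le_max_left _ _
    have hq2 : r / 2 ≤ q := le_max_right _ _
    have hqr : q < r := max_lt (by linarith) (by linarith)
    have h3p : ∀ x ∈ Icc q r, 0 < v3 x := by
      intro x hx
      apply hball
      rw [Real.dist_eq, abs_sub_comm, abs_of_nonneg (by linarith [hx.2])]
      linarith [hx.1]
    have h2n : ∀ x ∈ Ioo q r, v2 x < 0 := by
      intro x hx
      have := lt_of_deriv_neg (φ := fun t => -v2 t) (fun t => (h.d2 t).neg) hx.2
        (fun y hy => by linarith [h3p y ⟨by linarith [hy.1, hx.1], hy.2.le⟩])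
      rw [h2r] at this
      linarith
    have := lt_of_deriv_neg h.d1 hqr h2n
    rw [h1r] at this
    have := hle q (by linarith) hqr
    linarith
  -- backwards comparison
  have hn : ∀ {u u' : ℝ → ℝ}, (∀ t, HasDerivAt u (u' t) t) →
      ∀ t, HasDerivAt (fun s => u (r - s)) (-u' (r - t)) t := by
    intro u u' hu t
    have := (hu (r - t)).comp t ((hasDerivAt_id t).const_sub r)
    simpa [Function.comp_def] using this
  have hu := comparison (φ := fun s => v2 (r - s) - b ^ 2 * v0 (r - s))
    (φ' := fun s => -v3 (r - s) - b ^ 2 * (-v1 (r - s)))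
    (φ'' := fun s => -(-(A * v2 (r - s) - B * v0 (r - s) + f (v0 (r - s))))
      - b ^ 2 * (-(-v2 (r - s)))) (k := a) (T := r)
    (fun t => (hn h.d2 t).sub ((hn h.d0 t).const_mul _))
    (fun t => ((hn h.d3 t).neg).sub (((hn h.d1 t).neg).const_mul _))
    (by
      intro x _
      have := hf0 (v0 (r - x))
      rw [hAab, hBab]
      nlinarith)
    (by simp [h2r, hrz]) (by simp [h1r, h3r]) ha.le
  have hfin := lt_of_deriv_neg (φ := v1) (φ' := fun t => v2 t) h.d1 (s := 0) (t := r) hr0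
  have hfin2 := lt_of_deriv_neg (φ := fun t => -v1 t) (φ' := fun t => -v2 t)
    (fun t => (h.d1 t).neg) (s := 0) (t := r) hr0 (by
      intro x hx
      have h5 := hu (r - x) ⟨by linarith [hx.2], by linarith [hx.1]⟩
      simp only [sub_sub_cancel] at h5
      have := hrn x hx.1.le hx.2
      have : 0 < b ^ 2 * v0 x := by positivity
      linarith)
  rw [h1r, h.i1] at hfin2
  linarith

lemma limit_zero (h : Traj A B f v0 v1 v2 v3) (hA : 0 < A) {τ : ℝ} (hfc : Continuous f)
    (hf1 : ∀ x, 0 < x → x < τ → f x < B * x)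
    (hf2 : ∀ x, τ ≤ x → x ≤ v0 0 → B * x ≤ f x)
    (hm : v2 0 < 0) (hpos : ∀ t, 0 ≤ t → 0 < v0 t) (hn2 : ¬ Turns v0 v1) :
    AntitoneOn v0 (Ici 0) ∧ Tendsto v0 atTop (nhds 0) := by
  have hle : ∀ t, 0 ≤ t → v1 t ≤ 0 := by
    intro t ht
    rcases eq_or_lt_of_le ht with rfl | ht'
    · exact h.i1.le
    · by_contra hc
      exact hn2 ⟨t, ht', not_le.1 hc, fun x hx => hpos x hx.1⟩
  have hanti : AntitoneOn v0 (Ici 0) := by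
    intro s hs t ht hst
    have := le_of_deriv_le h.d0 hst (c := 0) fun x hx => hle x (le_trans hs hx.1)
    linarith
  refine ⟨hanti, ?_⟩
  have hle0 : ∀ t, 0 ≤ t → v0 t ≤ v0 0 := fun t ht => hanti self_mem_Ici ht ht
  obtain ⟨l, hl⟩ : ∃ l, Tendsto v0 atTop (nhds l) := by
    have hw : Antitone (fun t => v0 (max t 0)) := by
      intro s t hst
      exact hanti (le_max_right s 0) (le_max_right t 0) (max_le_max_right 0 hst)
    have hb : BddBelow (range fun t => v0 (max t 0)) :=
      ⟨0, by rintro _ ⟨t, rfl⟩; exact (hpos _ (le_max_right t 0)).le⟩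
    refine ⟨_, (tendsto_atTop_ciInf hw hb).congr' ?_⟩
    filter_upwards [eventually_ge_atTop 0] with t ht
    rw [max_eq_left ht]
  have hl0 : 0 ≤ l := ge_of_tendsto hl (by
    filter_upwards [eventually_ge_atTop 0] with t ht
    exact (hpos t ht).le)
  have hge : ∀ t, 0 ≤ t → l ≤ v0 t := fun t ht => le_of_tendsto hl (by
    filter_upwards [eventually_ge_atTop t] with s hs
    exact hanti ht (ht.trans hs) hs)
  have nobot : ¬ Tendsto v0 atTop atBot := by
    intro hb0
    obtain ⟨t, ht, ht'⟩ := ((hb0.eventually_le_atBot (-1)).and (eventually_ge_atTop 0)).exists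
    linarith [hpos t ht']
  have y1 : ∀ t, HasDerivAt (fun t => v2 t - A * v0 t) (v3 t - A * v1 t) t :=
    fun t => (h.d2 t).sub ((h.d0 t).const_mul A)
  have y2 : ∀ t, HasDerivAt (fun t => v3 t - A * v1 t) (f (v0 t) - B * v0 t) t := by
    intro t
    refine ((h.d3 t).sub ((h.d1 t).const_mul A)).congr_deriv ?_
    ring
  rcases lt_or_ge l τ with hlt | hge'
  · rcases eq_or_lt_of_le hl0 with h0 | hlpos
    · rw [h0]; exact hl
    · exfalso
      have hk : f l - B * l < 0 := by linarith [hf1 l hlpos hlt]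
      have hlim : Tendsto (fun t => f (v0 t) - B * v0 t) atTop (nhds (f l - B * l)) :=
        ((hfc.tendsto l).comp hl).sub (hl.const_mul B)
      have e1 : Tendsto (fun t => v3 t - A * v1 t) atTop atBot :=
        tendsto_atBot_of_deriv y2 (c := (f l - B * l) / 2) (by linarith)
          ((hlim.eventually_lt_const (show f l - B * l < (f l - B * l) / 2 by linarith)).mono
            fun t ht => ht.le)
      have e2 := tendsto_atBot_of_deriv' y1 e1
      have e3 : Tendsto v2 atTop atBot := by
        refine tendsto_atBot_mono' _ ?_ (tendsto_atBot_add_const_right _ (A * v0 0) e2)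
        filter_upwards [eventually_ge_atTop 0] with t ht
        have := mul_le_mul_of_nonneg_left (hle0 t ht) hA.le
        linarith
      exact nobot (tendsto_atBot_of_deriv' h.d0 (tendsto_atBot_of_deriv' h.d1 e3))
  · exfalso
    have hy2 : ∀ t, 0 ≤ t → 0 ≤ f (v0 t) - B * v0 t := fun t ht => by
      linarith [hf2 (v0 t) (hge'.trans (hge t ht)) (hle0 t ht)]
    have hy1 : ∀ s, 0 ≤ s → v3 s - A * v1 s ≤ 0 := by
      intro s hs
      by_contra hc
      push Not at hc
      have g1 : ∀ t, s ≤ t → v3 s - A * v1 s ≤ v3 t - A * v1 t := by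
        intro t ht
        have := ge_of_deriv_ge y2 ht (c := 0) fun x hx => hy2 x (hs.trans hx.1)
        linarith
      have e2 : Tendsto (fun t => -(v2 t - A * v0 t)) atTop atBot :=
        tendsto_atBot_of_deriv (fun t => (y1 t).neg) (c := -(v3 s - A * v1 s)) (by linarith) (by
          filter_upwards [eventually_ge_atTop s] with t ht
          linarith [g1 t ht])
      have e3 : Tendsto (fun t => -v2 t) atTop atBot := by
        refine tendsto_atBot_mono' _ ?_ e2
        filter_upwards [eventually_ge_atTop 0] with t ht
        have := mul_pos hA (hpos t ht)
        linarith
      have e4 := tendsto_atBot_of_deriv' (fun t => (h.d1 t).neg) e3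
      obtain ⟨t, ht, ht'⟩ := ((e4.eventually_le_atBot (-1)).and (eventually_ge_atTop 0)).exists
      have := hle t ht'
      simp only [Pi.neg_apply] at ht
      linarith
    have hv2 : ∀ t, 0 ≤ t → v2 t ≤ v2 0 := by
      intro t ht
      have := le_of_deriv_le y1 ht (c := 0) fun x hx => hy1 x hx.1
      have := mul_le_mul_of_nonneg_left (hle0 t ht) hA.le
      linarith
    exact nobot (tendsto_atBot_of_deriv' h.d0 (tendsto_atBot_of_deriv h.d1 hm (by
      filter_upwards [eventually_ge_atTop 0] with t ht
      exact hv2 t ht)))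

end traj

lemma turns_open {v0 v1 : ℝ → ℝ → ℝ} (c0 : Continuous (fun p : ℝ × ℝ => v0 p.1 p.2))
    (c1 : Continuous (fun p : ℝ × ℝ => v1 p.1 p.2)) :
    IsOpen {a | Turns (v0 a) (v1 a)} := by
  rw [isOpen_iff_mem_nhds]
  rintro a ⟨T, hT, h1, h2⟩
  have e1 : ∀ᶠ x in nhds a, 0 < v1 x T :=
    (c1.comp (by fun_prop : Continuous fun x : ℝ => (x, T))).continuousAt.eventually_const_lt h1
  have e2 : ∀ᶠ x in nhds a, ∀ t ∈ Icc 0 T, 0 < v0 x t := by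
    apply isCompact_Icc.eventually_forall_of_forall_eventually
    intro t ht
    exact c0.continuousAt.eventually_const_lt (h2 t ht)
  filter_upwards [e1, e2] with x h1 h2
  exact ⟨T, hT, h1, h2⟩

lemma crosses_nhds {v0 v1 v2 : ℝ → ℝ → ℝ} (c0 : Continuous (fun p : ℝ × ℝ => v0 p.1 p.2))
    (c1 : Continuous (fun p : ℝ × ℝ => v1 p.1 p.2))
    (c2 : Continuous (fun p : ℝ × ℝ => v2 p.1 p.2))
    (d1 : ∀ a t, HasDerivAt (v1 a) (v2 a t) t) (i1 : ∀ a, v1 a 0 = 0) {a : ℝ}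
    (hm : v2 a 0 < 0) (h : Crosses (v0 a) (v1 a)) :
    ∀ᶠ x in nhds a, Crosses (v0 x) (v1 x) := by
  obtain ⟨T, hT, h1, h2⟩ := h
  have e1 : ∀ᶠ x in nhds a, v0 x T < 0 :=
    (c0.comp (by fun_prop : Continuous fun x : ℝ => (x, T))).continuousAt.eventually_lt_const h1
  have e0 : ∀ᶠ p in nhds (a, (0:ℝ)), v2 p.1 p.2 < 0 :=
    c2.continuousAt.eventually_lt_const hm
  obtain ⟨e, he, hball⟩ := Metric.eventually_nhds_iff.1 e0
  have e2 : ∀ᶠ x in nhds a, ∀ t ∈ Icc (e / 2) T, v1 x t < 0 := by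
    apply isCompact_Icc.eventually_forall_of_forall_eventually
    intro t ht
    exact c1.continuousAt.eventually_lt_const (h2 t ⟨by linarith [ht.1], ht.2⟩)
  filter_upwards [e1, e2, Metric.ball_mem_nhds a he] with x h1 h2 h3
  refine ⟨T, hT, h1, fun t ht => ?_⟩
  rcases le_or_gt (e / 2) t with h4 | h4
  · exact h2 t ⟨h4, ht.2⟩
  · have := lt_of_deriv_neg (d1 x) ht.1 (fun y hy => by
      apply hball (y := (x, y))
      rw [Prod.dist_eq]
      refine max_lt h3 ?_
      simp only [Real.dist_eq, sub_zero]
      rw [abs_of_pos hy.1]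
      linarith [hy.2])
    rwa [i1] at this

lemma turns_top {A B : ℝ} {f v0 v1 v2 v3 : ℝ → ℝ} (h : Traj A B f v0 v1 v2 v3)
    (hfc : Continuous f) (hpos : 0 < v0 0) (h2 : v2 0 = 0) (hf : B * v0 0 < f (v0 0)) :
    Turns v0 v1 := by
  have c0 := cont_of h.d0
  have c2 := cont_of h.d2
  have hev : ∀ᶠ t in nhds (0:ℝ), 0 < A * v2 t - B * v0 t + f (v0 t) := by
    apply (by fun_prop : Continuous fun t =>
      A * v2 t - B * v0 t + f (v0 t)).continuousAt.eventually_const_lt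
    simp only [h2]; linarith
  obtain ⟨e, he, hball⟩ := Metric.eventually_nhds_iff.1 hev
  have inc : ∀ {φ φ' : ℝ → ℝ}, (∀ t, HasDerivAt φ (φ' t) t) → φ 0 = 0 →
      (∀ t, 0 < t → t < e → 0 < φ' t) → ∀ t, 0 < t → t < e → 0 < φ t := by
    intro φ φ' hd h0 hp t ht hte
    have := lt_of_deriv_neg (φ := fun t => -φ t) (fun t => (hd t).neg) ht
      (fun x hx => by linarith [hp x hx.1 (hx.2.trans hte)])
    linarith
  have p3 := inc h.d3 h.i3 (fun t ht hte => hball (by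
    rw [Real.dist_eq, sub_zero, abs_of_pos ht]; exact hte))
  have p2 := inc h.d2 h2 p3
  have p1 := inc h.d1 h.i1 p2
  refine ⟨e / 2, by linarith, p1 _ (by linarith) (by linarith), fun t ht => ?_⟩
  have := ge_of_deriv_ge h.d0 ht.1 (c := 0) (fun x hx => by
    rcases eq_or_lt_of_le hx.1 with h0 | h0
    · rw [← h0, h.i1]
    · exact (p1 x h0 (by linarith [hx.2, ht.2])).le)
  linarith

lemma shooting {f : ℝ → ℝ} {L : NNReal} (hf : LipschitzWith L f) (hf0 : ∀ x, 0 ≤ f x)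
    (hfz : f 0 = 0)
    {A B a b τ α₀ : ℝ} (ha : 0 < a) (hb : 0 < b)
    (hAab : A = a ^ 2 + b ^ 2) (hBab : B = a ^ 2 * b ^ 2)
    (hτ : 0 < τ) (hτα : τ < α₀) (hf1 : ∀ x, 0 < x → x < τ → f x < B * x)
    (hf2 : ∀ x, τ ≤ x → x ≤ α₀ → B * x ≤ f x) (hα : B * α₀ < f α₀)
    {G : ℝ → ℝ} (hG : ∀ x, HasDerivAt G (f x) x) (hG0 : G 0 = 0)
    (hF : ∀ x, 0 < x → x < α₀ → 0 < B * x ^ 2 - 2 * G x) (hFα : B * α₀ ^ 2 - 2 * G α₀ = 0) :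
    ∃ v0 v1 v2 v3 : ℝ → ℝ, Traj A B f v0 v1 v2 v3 ∧ (∀ t, 0 < v0 t) ∧ (∀ t, v0 t ≤ α₀) ∧
      (∀ t, v0 (-t) = v0 t) ∧ AntitoneOn v0 (Ici 0) ∧ Tendsto v0 atTop (nhds 0) := by
  have hGc := cont_of hG
  have hA : 0 < A := by rw [hAab]; positivity
  obtain ⟨v0, v1, v2, v3, d0, d1, d2, d3, i0, i1, i2, i3, c0, c1, c2, ev⟩ :=
    family hf A B (m := fun x => -√(B * x ^ 2 - 2 * G x)) (by fun_prop)
  have tr : ∀ x, Traj A B f (v0 x) (v1 x) (v2 x) (v3 x) := fun x =>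
    ⟨d0 x, d1 x, d2 x, d3 x, i1 x, i3 x⟩
  have hm : ∀ x, 0 < x → x < α₀ → v2 x 0 < 0 := by
    intro x h1 h2
    rw [i2]
    have := Real.sqrt_pos.2 (hF x h1 h2)
    linarith
  have key : ∃ x ∈ Ioo 0 α₀, ¬ Crosses (v0 x) (v1 x) ∧ ¬ Turns (v0 x) (v1 x) := by
    by_contra hcon
    push Not at hcon
    have hUo : IsOpen {x | x ∈ Ioo 0 α₀ ∧ Crosses (v0 x) (v1 x)} := by
      rw [isOpen_iff_mem_nhds]
      rintro x ⟨hx, hxc⟩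
      filter_upwards [isOpen_Ioo.mem_nhds hx,
        crosses_nhds c0 c1 c2 d1 i1 (hm x hx.1 hx.2) hxc] with y h1 h2
      exact ⟨h1, h2⟩
    have hVo := turns_open c0 c1
    have hαV : Turns (v0 α₀) (v1 α₀) := by
      apply turns_top (tr α₀) hf.continuous
      · rw [i0]; linarith
      · rw [i2, hFα]; simp
      · rw [i0]; exact hα
    obtain ⟨x, _, hx1, hx2⟩ := isPreconnected_Ioo (a := 0) (b := α₀) _ _ hUo hVo
      (by
        intro x hx
        by_cases hc : Crosses (v0 x) (v1 x)
        · exact Or.inl ⟨hx, hc⟩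
        · exact Or.inr (hcon x hx hc))
      (by
        have hτ2 : τ / 2 ∈ Ioo 0 α₀ := ⟨by linarith, by linarith⟩
        refine ⟨τ / 2, hτ2, hτ2, ?_⟩
        apply crosses_of_small (tr _) hA
        · rw [i0]; linarith
        · exact hm _ hτ2.1 hτ2.2
        · rw [i0]
          intro x hx
          rcases eq_or_lt_of_le hx.1 with h0 | h0
          · rw [← h0, hfz]; simp
          · exact (hf1 x h0 (by linarith [hx.2])).le)
      (by
        obtain ⟨e, he, hball⟩ := Metric.isOpen_iff.1 hVo α₀ hαV
        set q := max (α₀ - e / 2) (α₀ / 2)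
        have hq1 : α₀ - e / 2 ≤ q := le_max_left _ _
        have hq2 : α₀ / 2 ≤ q := le_max_right _ _
        have hqr : q < α₀ := max_lt (by linarith) (by linarith)
        refine ⟨q, ⟨by linarith, hqr⟩, hball ?_⟩
        rw [Metric.mem_ball, Real.dist_eq, abs_sub_comm, abs_of_pos (by linarith)]
        linarith)
    exact not_both hx1.2 hx2
  obtain ⟨x, hx, hn1, hn2⟩ := key
  have hE := energy (tr x) hG (by
    rw [i2, i0, neg_sq, Real.sq_sqrt (hF x hx.1 hx.2).le])
  have hp := pos_of_neither (tr x) ha hb hAab hBab hE hG0 hF hf0 (by rw [i0]; exact hx.1)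
    (by rw [i0]; exact hx.2) hn1 hn2
  obtain ⟨hanti, hlim⟩ := limit_zero (tr x) hA hf.continuous hf1
    (fun y h1 h2 => hf2 y h1 (by rw [i0] at h2; linarith [hx.2])) (hm x hx.1 hx.2) hp hn2
  have habs : ∀ t, v0 x |t| = v0 x t := by
    intro t
    rcases abs_choice t with h | h <;> rw [h]
    exact ev x t
  refine ⟨v0 x, v1 x, v2 x, v3 x, tr x, ?_, ?_, ev x, hanti, hlim⟩
  · intro t; rw [← habs]; exact hp _ (abs_nonneg t)
  · intro t
    rw [← habs]
    have := hanti (self_mem_Ici) (mem_Ici.2 (abs_nonneg t)) (abs_nonneg t)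
    rw [i0] at this
    linarith [hx.2]

lemma contDiff_succ_of {φ φ' : ℝ → ℝ} {k : ℕ} (h : ∀ t, HasDerivAt φ (φ' t) t)
    (hc : ContDiff ℝ k φ') : ContDiff ℝ ((k + 1 : ℕ) : WithTop ℕ∞) φ := by
  push_cast
  rw [contDiff_succ_iff_deriv]
  refine ⟨fun t => (h t).differentiableAt, by simp, ?_⟩
  rwa [show deriv φ = φ' from funext fun t => (h t).deriv]

lemma prep {n : ℕ} (hn : 5 ≤ n) {g : ℝ → ℝ} (hg : CondG n g) {B : ℝ} (hBpos : 0 < B)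
    (hB : B = (n : ℝ) ^ 2 * ((n : ℝ) - 4) ^ 2 / 16) :
    ∃ (f G : ℝ → ℝ) (L : NNReal) (τ α₀ : ℝ), LipschitzWith L f ∧ (∀ x, 0 ≤ f x) ∧ f 0 = 0 ∧
      0 < τ ∧ τ < α₀ ∧ (∀ x, 0 < x → x < τ → f x < B * x) ∧
      (∀ x, τ ≤ x → x ≤ α₀ → B * x ≤ f x) ∧ B * α₀ < f α₀ ∧
      (∀ x, HasDerivAt G (f x) x) ∧ G 0 = 0 ∧
      (∀ x, 0 < x → x < α₀ → 0 < B * x ^ 2 - 2 * G x) ∧ B * α₀ ^ 2 - 2 * G α₀ = 0 ∧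
      (∀ x, 0 < x → x ≤ α₀ → f x = g x) := by
  obtain ⟨hsm, hpos, hlim0, hder, ⟨β, hβ0, hβB, hβ⟩, ⟨q, c, hq, hc, hgrow⟩, hg0⟩ := hg
  rw [← hB] at hβB
  have hdiff : ∀ t, 0 < t → HasDerivAt g (deriv g t) t := fun t ht =>
    ((hsm.contDiffAt (Ioi_mem_nhds ht)).differentiableAt (by simp)).hasDerivAt
  -- the ratio is strictly increasing
  have hratio : StrictMonoOn (fun t => g t / t) (Ioi 0) := by
    have hd : ∀ t, 0 < t → HasDerivAt (fun t => g t / t) ((deriv g t * t - g t * 1) / t ^ 2) t :=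
      fun t ht => (hdiff t ht).div (hasDerivAt_id t) ht.ne'
    apply strictMonoOn_of_deriv_pos (convex_Ioi 0)
    · exact fun t ht => (hd t ht).continuousAt.continuousWithinAt
    · intro t ht
      rw [interior_Ioi] at ht
      have ht' : 0 < t := ht
      rw [(hd t ht).deriv]
      have := (hder t ht).1
      rw [div_lt_iff₀ ht'] at this
      apply div_pos _ (by positivity)
      linarith
  have hrc : ContinuousOn (fun t => g t / t) (Ioi 0) := fun t ht =>
    ((hdiff t ht).continuousAt.div continuousAt_id (ne_of_gt ht)).continuousWithinAt
  -- small s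
  obtain ⟨s, hs, hsB⟩ : ∃ s, 0 < s ∧ g s / s < B := by
    obtain ⟨s, h1, h2⟩ := ((hβ.eventually_lt_const hβB).and self_mem_nhdsWithin).exists
    exact ⟨s, h2, (hder s h2).1.trans h1⟩
  -- large t1
  obtain ⟨t1, ht1, ht1B⟩ : ∃ t1, 1 ≤ t1 ∧ 4 * B ≤ g t1 / t1 := by
    have h1 : Tendsto (fun t : ℝ => c * t ^ (q - 1)) atTop atTop :=
      (tendsto_rpow_atTop (by linarith)).const_mul_atTop hc
    obtain ⟨t, h2, h3⟩ := ((h1.eventually_ge_atTop (4 * B)).and (eventually_ge_atTop 1)).exists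
    have htp : 0 < t := by linarith
    refine ⟨t, h3, h2.trans ?_⟩
    rw [le_div_iff₀ htp]
    have := hgrow t h3
    calc c * t ^ (q - 1) * t = c * t ^ q := by
          rw [mul_assoc, ← Real.rpow_add_one htp.ne', sub_add_cancel]
      _ ≤ g t := this
  have ht1p : 0 < t1 := by linarith
  have hst : s < t1 := by
    by_contra hcon
    have := hratio.monotoneOn (mem_Ioi.2 ht1p) (mem_Ioi.2 hs) (not_lt.1 hcon)
    linarith
  obtain ⟨τ, hτm, hτB⟩ : ∃ τ ∈ Icc s t1, g τ / τ = B := by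
    have := intermediate_value_Icc hst.le
      (hrc.mono fun x hx => mem_Ioi.2 (lt_of_lt_of_le hs hx.1))
    exact this ⟨hsB.le, by linarith⟩
  have hτ : 0 < τ := lt_of_lt_of_le hs hτm.1
  have hτt1 : τ < t1 := by
    refine lt_of_le_of_ne hτm.2 fun h => ?_
    rw [h] at hτB
    linarith
  have hlow : ∀ x, 0 < x → x < τ → g x < B * x := by
    intro x hx hxτ
    have := hratio (mem_Ioi.2 hx) (mem_Ioi.2 hτ) hxτ
    simp only at this
    rwa [hτB, div_lt_iff₀ hx] at this
  have hhigh : ∀ x, τ < x → B * x < g x := by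
    intro x hx
    have := hratio (mem_Ioi.2 hτ) (mem_Ioi.2 (hτ.trans hx)) hx
    simp only at this
    rwa [hτB, lt_div_iff₀ (hτ.trans hx)] at this
  set R := 2 * t1 with hR
  have hRp : 0 < R := by positivity
  -- Lipschitz on [0,R]
  have hgc : ContinuousOn g (Icc 0 R) := by
    intro x hx
    rcases eq_or_lt_of_le hx.1 with h0 | h0
    · rw [← h0]
      have h1 : ContinuousWithinAt g (Ioi 0) 0 := by
        rw [ContinuousWithinAt, hg0]; exact hlim0
      exact (continuousWithinAt_Ioi_iff_Ici.1 h1).mono fun x hx => hx.1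
    · exact (hdiff x h0).continuousAt.continuousWithinAt
  have hn5 : (5:ℝ) ≤ n := by exact_mod_cast hn
  set M := ((n : ℝ) + 4) / ((n : ℝ) - 4) * (g R / R) with hM
  have hppos : 0 < ((n : ℝ) + 4) / ((n : ℝ) - 4) := div_pos (by linarith) (by linarith)
  have hMpos : 0 ≤ M := mul_nonneg hppos.le (div_pos (hpos R hRp) hRp).le
  have hdM : ∀ x ∈ interior (Icc 0 R), deriv g x ≤ M := by
    intro x hx
    rw [interior_Icc] at hx
    refine (hder x hx.1).2.trans ?_
    exact mul_le_mul_of_nonneg_left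
      (hratio.monotoneOn (mem_Ioi.2 hx.1) (mem_Ioi.2 hRp) hx.2.le) hppos.le
  have hd0 : ∀ x ∈ interior (Icc 0 R), 0 ≤ deriv g x := by
    intro x hx
    rw [interior_Icc] at hx
    exact ((div_pos (hpos x hx.1) hx.1).trans (hder x hx.1).1).le
  have hdo : DifferentiableOn ℝ g (interior (Icc 0 R)) := by
    intro x hx
    rw [interior_Icc] at hx
    exact (hdiff x hx.1).differentiableAt.differentiableWithinAt
  have hLip : LipschitzOnWith (Real.toNNReal M) g (Icc 0 R) := by
    have hle : ∀ x ∈ Icc 0 R, ∀ y ∈ Icc 0 R, x ≤ y → dist (g x) (g y) ≤ M * dist x y := by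
      intro x hx y hy hxy
      have u1 := (convex_Icc 0 R).image_sub_le_mul_sub_of_deriv_le hgc hdo hdM x hx y hy hxy
      have u2 := (convex_Icc 0 R).mul_sub_le_image_sub_of_le_deriv hgc hdo hd0 x hx y hy hxy
      rw [dist_comm, dist_comm x, Real.dist_eq, Real.dist_eq, abs_of_nonneg (by linarith),
        abs_of_nonneg (by linarith)]
      exact u1
    apply LipschitzOnWith.of_dist_le_mul
    intro x hx y hy
    rw [Real.coe_toNNReal _ hMpos]
    rcases le_total x y with h | h
    · exact hle x hx y hy h
    · rw [dist_comm, dist_comm x]; exact hle y hy x hx h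
  set f : ℝ → ℝ := IccExtend hRp.le ((Icc 0 R).restrict g) with hf
  have hfg : ∀ x ∈ Icc 0 R, f x = g x := fun x hx => by
    rw [hf, IccExtend_of_mem _ _ hx]; rfl
  have hfL : LipschitzWith (Real.toNNReal M * 1) f :=
    hLip.to_restrict.comp (LipschitzWith.projIcc hRp.le)
  have hf0 : ∀ x, 0 ≤ f x := by
    intro x
    have hmem := (projIcc 0 R hRp.le x).2
    show 0 ≤ g (projIcc 0 R hRp.le x)
    rcases eq_or_lt_of_le hmem.1 with h | h
    · rw [← h, hg0]
    · exact (hpos _ h).le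
  have hfc : Continuous f := hfL.continuous
  let G : ℝ → ℝ := fun x => ∫ t in (0:ℝ)..x, f t
  have hG : ∀ x, HasDerivAt G (f x) x := fun x => (hfc.integral_hasStrictDerivAt 0 x).hasDerivAt
  have hG0 : G 0 = 0 := by simp [G]
  have hFd : ∀ x, HasDerivAt (fun x => B * x ^ 2 - 2 * G x) (2 * (B * x - f x)) x := by
    intro x
    refine (((hasDerivAt_pow 2 x).const_mul B).sub ((hG x).const_mul 2)).congr_deriv ?_
    simp; ring
  have hFlow : ∀ x, 0 < x → x ≤ τ → 0 < B * x ^ 2 - 2 * G x := by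
    intro x hx hxτ
    have := lt_of_deriv_neg (fun x => (hFd x).neg) hx (fun y hy => by
      rw [hfg y ⟨hy.1.le, by linarith [hy.2]⟩]
      linarith [hlow y hy.1 (by linarith [hy.2])])
    simp only [Pi.neg_apply, hG0] at this
    linarith
  have hFhigh : ∀ x y, τ ≤ x → x < y → y ≤ R → B * y ^ 2 - 2 * G y < B * x ^ 2 - 2 * G x := by
    intro x y hx hxy hy
    exact lt_of_deriv_neg hFd hxy (fun z hz => by
      rw [hfg z ⟨by linarith [hz.1], by linarith [hz.2]⟩]
      linarith [hhigh z (by linarith [hz.1])])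
  have hFR : B * R ^ 2 - 2 * G R < 0 := by
    have g1 : G 0 + 0 * (t1 - 0) ≤ G t1 := ge_of_deriv_ge hG ht1p.le (fun x _ => hf0 x)
    have g2 : G t1 + (4 * B * t1) * (R - t1) ≤ G R :=
      ge_of_deriv_ge hG (by linarith) (fun x hx => by
        have hxp : 0 < x := by linarith [hx.1]
        rw [hfg x ⟨hxp.le, hx.2⟩]
        have h1 := hratio.monotoneOn (mem_Ioi.2 ht1p) (mem_Ioi.2 hxp) hx.1
        have h2 : 4 * B ≤ g x / x := ht1B.trans h1
        rw [le_div_iff₀ hxp] at h2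
        have h3 : 4 * B * t1 ≤ 4 * B * x := mul_le_mul_of_nonneg_left hx.1 (by positivity)
        linarith)
    rw [hG0] at g1
    have h3 : 0 < B * t1 ^ 2 := by positivity
    rw [hR] at g2 ⊢
    nlinarith
  obtain ⟨α₀, hαm, hα0⟩ : ∃ α₀ ∈ Icc τ R, B * α₀ ^ 2 - 2 * G α₀ = 0 := by
    have := intermediate_value_Icc' (a := τ) (b := R) (by linarith)
      (cont_of hFd).continuousOn
    exact this ⟨hFR.le, (hFlow τ hτ le_rfl).le⟩
  have hτα : τ < α₀ := by
    refine lt_of_le_of_ne hαm.1 fun h => ?_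
    have := hFlow τ hτ le_rfl
    rw [h] at this
    linarith
  have hfg' : ∀ x, 0 < x → x ≤ α₀ → f x = g x := fun x hx hxα => hfg x ⟨hx.le, hxα.trans hαm.2⟩
  refine ⟨f, G, _, τ, α₀, hfL, hf0, ?_, hτ, hτα, ?_, ?_, ?_, hG, hG0, ?_, hα0, hfg'⟩
  · rw [hfg 0 ⟨le_rfl, hRp.le⟩, hg0]
  · intro x hx hxτ
    rw [hfg' x hx (hxτ.trans hτα).le]
    exact hlow x hx hxτ
  · intro x hx hxα
    rw [hfg' x (hτ.trans_le hx) hxα]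
    rcases eq_or_lt_of_le hx with h | h
    · rw [← h]
      rw [div_eq_iff hτ.ne'] at hτB
      exact hτB.ge
    · exact (hhigh x h).le
  · rw [hfg' α₀ (hτ.trans hτα) le_rfl]
    exact hhigh _ hτα
  · intro x hx hxα
    rcases le_or_gt x τ with h | h
    · exact hFlow x hx h
    · rw [← hα0]
      exact hFhigh x α₀ h.le hxα hαm.2

theorem stmt_4 (n : ℕ) (hn : 5 ≤ n) (g : ℝ → ℝ) (hg : CondG n g)
    (A B : ℝ) (hA : A = ((n : ℝ) * ((n : ℝ) - 4) + 8) / 2)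
    (hB : B = (n : ℝ) ^ 2 * ((n : ℝ) - 4) ^ 2 / 16) :
    ∃ v : ℝ → ℝ, ContDiff ℝ 4 v ∧ (∀ t, 0 < v t) ∧ IsSol A B g v ∧
      Filter.Tendsto v Filter.atTop (nhds 0) ∧ Filter.Tendsto v Filter.atBot (nhds 0) ∧
      (∀ t, v (-t) = v t) ∧ AntitoneOn v (Set.Ici 0) := by
  have hn5 : (5:ℝ) ≤ n := by exact_mod_cast hn
  have ha : (0:ℝ) < (n:ℝ) / 2 := by linarith
  have hb : (0:ℝ) < ((n:ℝ) - 4) / 2 := by linarith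
  have hAab : A = ((n:ℝ) / 2) ^ 2 + (((n:ℝ) - 4) / 2) ^ 2 := by rw [hA]; ring
  have hBab : B = ((n:ℝ) / 2) ^ 2 * (((n:ℝ) - 4) / 2) ^ 2 := by rw [hB]; ring
  have hBpos : 0 < B := by rw [hBab]; positivity
  obtain ⟨f, G, L, τ, α₀, hf, hf0, hfz, hτ, hτα, hf1, hf2, hα, hG, hG0, hF, hFα, hfg⟩ :=
    prep hn hg hBpos hB
  obtain ⟨v0, v1, v2, v3, tr, hpos, hle, hev, hanti, hlim⟩ :=
    shooting hf hf0 hfz ha hb hAab hBab hτ hτα hf1 hf2 hα hG hG0 hF hFα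
  have c0 := cont_of tr.d0
  have c2 := cont_of tr.d2
  have hfc := hf.continuous
  have hc : Continuous fun t => A * v2 t - B * v0 t + f (v0 t) := by fun_prop
  have e1 : deriv v0 = v1 := funext fun t => (tr.d0 t).deriv
  have e2 : deriv v1 = v2 := funext fun t => (tr.d1 t).deriv
  have e3 : deriv v2 = v3 := funext fun t => (tr.d2 t).deriv
  refine ⟨v0, ?_, hpos, ?_, hlim, ?_, hev, hanti⟩
  · have k0 : ContDiff ℝ ((0 : ℕ) : WithTop ℕ∞) fun t => A * v2 t - B * v0 t + f (v0 t) := by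
      exact_mod_cast (contDiff_zero (𝕜 := ℝ)).2 hc
    have := contDiff_succ_of tr.d0 (contDiff_succ_of tr.d1 (contDiff_succ_of tr.d2
      (contDiff_succ_of tr.d3 k0)))
    simpa using this
  · intro t
    rw [← hfg (v0 t) (hpos t) (hle t)]
    simp only [iteratedDeriv_succ, iteratedDeriv_zero, e1, e2, e3, (tr.d3 t).deriv]
    ring
  · have := hlim.comp tendsto_neg_atBot_atTop
    refine this.congr fun t => ?_
    exact hev t
end
end
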